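/- arXiv:math/0005279 — 2 statements merged into one kernel-verified Lean document; each statement's English description precedes it below -/
import Mathlib

section
/- Let d ≤ 2, q > 1/2, α, β ∈ ℝ, 0 < δ ≤ 1 and G > 0. There exists a constant C < ∞ (depending only on d, q, α, δ and G) such that: for every y ∈ ℝ^d, every bounded continuous forcing g : ℝ^d × [0,∞) → ℂ with sup_{t ≥ 0} ∫ φ_{δ,y}(x)|g(x,t)|² dx ≤ G, and every bounded classical solution u on ℝ^d × [0,∞) of the Ginzburg–Landau equation ∂_t u = (1+iα)Δu + u − (1+iβ)|u|^{2q}u + g, one has for all t ≥ 0: ∫ φ_{δ,y}(x)|u(x,t)|² dx ≤ e^{−t} ∫ φ_{δ,y}(x)|u(x,0)|² dx + C. -/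
open Complex MeasureTheory

/-- The weight function `φ_{δ,y}(x) = exp(−√(1+δ²|x−y|²))` on `ℝ^d`. -/
noncomputable def phi (d : ℕ) (δ : ℝ) (y x : EuclideanSpace ℝ (Fin d)) : ℝ :=
  Real.exp (-Real.sqrt (1 + δ ^ 2 * ‖x - y‖ ^ 2))

/-- The Laplacian `Δw(x) = Σ_j ∂²_j w(x)` of `w : ℝ^d → ℂ`. -/
noncomputable def lap (d : ℕ) (w : EuclideanSpace ℝ (Fin d) → ℂ)
    (x : EuclideanSpace ℝ (Fin d)) : ℂ :=
  ∑ j : Fin d, iteratedFDeriv ℝ 2 w x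
    ![EuclideanSpace.single j (1 : ℝ), EuclideanSpace.single j (1 : ℝ)]

/-- `w` is a bounded classical solution on `ℝ^d × S` (for a time set `S ⊆ ℝ`) of the
Ginzburg–Landau equation `∂_t w = (1+iα)Δw + w − (1+iβ)|w|^{2q}w + g`. -/
def IsGLSolution (d : ℕ) (q α β : ℝ) (S : Set ℝ)
    (g w : EuclideanSpace ℝ (Fin d) → ℝ → ℂ) : Prop :=
  ContinuousOn (fun p : EuclideanSpace ℝ (Fin d) × ℝ => w p.1 p.2) (Set.univ ×ˢ S) ∧
  (∀ t ∈ S, ContDiff ℝ 2 (fun x => w x t)) ∧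
  (∃ B : ℝ, ∀ t ∈ S, ∀ x, ‖w x t‖ ≤ B ∧ ‖fderiv ℝ (fun x' => w x' t) x‖ ≤ B ∧
      ‖iteratedFDeriv ℝ 2 (fun x' => w x' t) x‖ ≤ B) ∧
  (∀ x, ∀ t ∈ S, HasDerivWithinAt (fun s => w x s)
      ((1 + Complex.I * (α : ℂ)) * lap d (fun x' => w x' t) x + w x t -
        (1 + Complex.I * (β : ℂ)) * ((‖w x t‖ ^ (2 * q) : ℝ) : ℂ) * w x t + g x t) S t)


open scoped ComplexConjugate InnerProductSpace

section Weight

variable {d : ℕ} {δ : ℝ} {y : EuclideanSpace ℝ (Fin d)}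

lemma phi_pos (x : EuclideanSpace ℝ (Fin d)) : 0 < phi d δ y x := Real.exp_pos _

lemma contDiff_phi {n : ℕ∞} : ContDiff ℝ n (phi d δ y) := by
  unfold phi
  refine (ContDiff.sqrt ?_ fun x => by positivity).neg.exp
  exact contDiff_const.add (contDiff_const.mul ((contDiff_id.sub contDiff_const).norm_sq ℝ))

lemma continuous_phi : Continuous (phi d δ y) := (contDiff_phi (n := 0)).continuous

lemma norm_fderiv_phi_apply_le (hδ0 : 0 < δ) (hδ1 : δ ≤ 1) (x e : EuclideanSpace ℝ (Fin d))
    (he : ‖e‖ ≤ 1) : ‖fderiv ℝ (phi d δ y) x e‖ ≤ phi d δ y x := by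
  have hpos : 0 < 1 + δ ^ 2 * ‖x - y‖ ^ 2 := by positivity
  have h := ((((hasFDerivAt_id (𝕜 := ℝ) x).sub_const y).norm_sq.const_mul (δ ^ 2)).const_add
    1).sqrt hpos.ne' |>.neg.exp
  have h' : HasFDerivAt (phi d δ y) _ x := h
  rw [h'.fderiv]
  set s := Real.sqrt (1 + δ ^ 2 * ‖x - y‖ ^ 2) with hs
  have hs0 : 0 < s := Real.sqrt_pos.2 hpos
  have hin : |⟪x - y, e⟫_ℝ| ≤ ‖x - y‖ := (abs_real_inner_le_norm _ _).trans
    (mul_le_of_le_one_right (norm_nonneg _) he)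
  have hxs : δ * ‖x - y‖ ≤ s := Real.le_sqrt_of_sq_le (by nlinarith)
  have key : |δ ^ 2 * ⟪x - y, e⟫_ℝ| ≤ s := by
    rw [abs_mul, abs_of_pos (by positivity : 0 < δ ^ 2)]
    calc δ ^ 2 * |⟪x - y, e⟫_ℝ| ≤ δ ^ 2 * ‖x - y‖ := by gcongr
      _ ≤ δ * ‖x - y‖ := by
        gcongr
        nlinarith
      _ ≤ s := hxs
  have hval : phi d δ y x = Real.exp (-s) := rfl
  simp only [id, hval, ← hs]
  simp only [smul_apply, neg_apply,
    ContinuousLinearMap.comp_apply, ContinuousLinearMap.id_apply, innerSL_apply_apply,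
    smul_eq_mul, nsmul_eq_mul, norm_mul, norm_neg, Real.norm_eq_abs, Real.abs_exp]
  refine mul_le_of_le_one_right (Real.exp_pos _).le ?_
  rw [← abs_mul]
  have : 1 / (2 * s) * (δ ^ 2 * ((2 : ℕ) * ⟪x - y, e⟫_ℝ)) = (δ ^ 2 * ⟪x - y, e⟫_ℝ) / s := by
    field_simp
    norm_num
  rw [← abs_mul, ← abs_mul, this, abs_div, abs_of_pos hs0, div_le_one hs0]
  exact key

lemma integrable_phi (hd : d ≤ 2) (hδ0 : 0 < δ) (hδ1 : δ ≤ 1) : Integrable (phi d δ y) := by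
  have h3 : ((Module.finrank ℝ (EuclideanSpace ℝ (Fin d)) : ℕ) : ℝ) < 3 := by
    rw [finrank_euclideanSpace_fin]
    exact_mod_cast Nat.lt_succ_of_le hd
  have hI := (((integrable_rpow_neg_one_add_norm_sq (μ := volume) h3).comp_sub_right y).const_mul
    (6 * δ⁻¹ ^ 3))
  refine hI.mono' continuous_phi.aestronglyMeasurable (.of_forall fun x => ?_)
  rw [Real.norm_of_nonneg (phi_pos x).le]
  have hp : 0 < 1 + ‖x - y‖ ^ 2 := by positivity
  set r := Real.sqrt (1 + ‖x - y‖ ^ 2) with hr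
  have hr0 : 0 < r := Real.sqrt_pos.2 hp
  have hr3 : (1 + ‖x - y‖ ^ 2) ^ (-3 / 2 : ℝ) = (r ^ 3)⁻¹ := by
    rw [hr, Real.sqrt_eq_rpow, ← Real.rpow_mul_natCast hp.le, ← Real.rpow_neg hp.le]
    norm_num
  rw [hr3]
  set s := Real.sqrt (1 + δ ^ 2 * ‖x - y‖ ^ 2) with hs
  have hrs : δ * r ≤ s := by
    refine Real.le_sqrt_of_sq_le ?_
    rw [mul_pow, hr, Real.sq_sqrt hp.le]
    nlinarith
  have hexp : (δ * r) ^ 3 / 6 ≤ Real.exp s := by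
    have h := Real.pow_div_factorial_le_exp (δ * r) (by positivity) 3
    exact (by simpa [Nat.factorial] using h : _ ≤ Real.exp (δ * r)).trans (Real.exp_le_exp.2 hrs)
  calc phi d δ y x = (Real.exp s)⁻¹ := Real.exp_neg s
    _ ≤ ((δ * r) ^ 3 / 6)⁻¹ := inv_anti₀ (by positivity) hexp
    _ = 6 * δ⁻¹ ^ 3 * (r ^ 3)⁻¹ := by field_simp

lemma integral_phi_eq : ∫ x, phi d δ y x = ∫ x, phi d δ 0 x := by
  rw [← integral_sub_right_eq_self (phi d δ 0) y]
  simp [phi]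

lemma integrable_phi_smul {F : Type*} [NormedAddCommGroup F] [NormedSpace ℝ F] (hd : d ≤ 2)
    (hδ0 : 0 < δ) (hδ1 : δ ≤ 1) {f : EuclideanSpace ℝ (Fin d) → F} (hf : Continuous f) {M : ℝ}
    (hM : ∀ x, ‖f x‖ ≤ M) : Integrable fun x => phi d δ y x • f x :=
  (integrable_phi hd hδ0 hδ1).smul_bdd M hf.aestronglyMeasurable (.of_forall hM)

end Weight

/-- The integral of the line derivative `∂_e (φ w̄ ∂_e w)`, written out by the product rule,
vanishes. -/
lemma integral_weighted_div_eq_zero {d : ℕ} {δ : ℝ} {y : EuclideanSpace ℝ (Fin d)} (hd : d ≤ 2)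
    (hδ0 : 0 < δ) (hδ1 : δ ≤ 1) {w : EuclideanSpace ℝ (Fin d) → ℂ} (hw : ContDiff ℝ 2 w) {B : ℝ}
    (hB : ∀ x, ‖w x‖ ≤ B ∧ ‖fderiv ℝ w x‖ ≤ B ∧ ‖iteratedFDeriv ℝ 2 w x‖ ≤ B)
    {e : EuclideanSpace ℝ (Fin d)} (he : ‖e‖ ≤ 1) :
    let D := fun x => fderiv ℝ (phi d δ y) x e • (conj (w x) * fderiv ℝ w x e) +
      phi d δ y x • (conj (fderiv ℝ w x e) * fderiv ℝ w x e +
        conj (w x) * iteratedFDeriv ℝ 2 w x ![e, e])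
    Integrable D ∧ ∫ x, D x = 0 := by
  intro D
  have hB0 : 0 ≤ B := (norm_nonneg _).trans (hB 0).1
  have hw1 : ContDiff ℝ 1 (fderiv ℝ w) := hw.fderiv_right le_rfl
  have hp : ContDiff ℝ 1 fun x => fderiv ℝ w x e := hw1.clm_apply contDiff_const
  have hpB (x) : ‖fderiv ℝ w x e‖ ≤ B :=
    ((fderiv ℝ w x).le_opNorm_of_le he).trans (by simpa using (hB x).2.1)
  have hlB (x) : ‖iteratedFDeriv ℝ 2 w x ![e, e]‖ ≤ B := by
    refine ((iteratedFDeriv ℝ 2 w x).le_opNorm _).trans ?_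
    rw [Fin.prod_univ_two]
    simpa using mul_le_mul (hB x).2.2 (mul_le_one₀ he (norm_nonneg _) he) (by positivity) hB0
  have hlc : Continuous fun x => iteratedFDeriv ℝ 2 w x ![e, e] :=
    (hw.continuous_iteratedFDeriv le_rfl).eval_const _
  set V : EuclideanSpace ℝ (Fin d) → ℂ := fun x => conj (w x) * fderiv ℝ w x e with hV
  have hVB (x) : ‖V x‖ ≤ B * B := by
    rw [hV, norm_mul, RCLike.norm_conj]
    exact mul_le_mul (hB x).1 (hpB x) (norm_nonneg _) hB0
  have hVd (x) : HasFDerivAt V _ x :=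
    ((conjCLE.toContinuousLinearMap.hasFDerivAt.comp x
      (hw.differentiable (by norm_num) x).hasFDerivAt)).mul
      (hp.differentiable (by norm_num) x).hasFDerivAt
  have hpd (x) : fderiv ℝ (fun x => fderiv ℝ w x e) x e = iteratedFDeriv ℝ 2 w x ![e, e] := by
    rw [iteratedFDeriv_two_apply]
    have := ((hw1.differentiable (by norm_num) x).hasFDerivAt.clm_apply
      (hasFDerivAt_const e x)).fderiv
    rw [this]
    simp
  have hVf (x) : fderiv ℝ V x e = conj (fderiv ℝ w x e) * fderiv ℝ w x e +
      conj (w x) * iteratedFDeriv ℝ 2 w x ![e, e] := by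
    rw [(hVd x).fderiv, ← hpd]
    simp
    ring
  have hVc : Continuous V := (continuous_conj.comp hw.continuous).mul hp.continuous
  have hφ'c : Continuous fun x => fderiv ℝ (phi d δ y) x e :=
    ((contDiff_phi (n := 1)).continuous_fderiv (by norm_num)).clm_apply continuous_const
  have i1 : Integrable fun x => fderiv ℝ (phi d δ y) x e • V x := by
    refine ((integrable_phi (y := y) hd hδ0 hδ1).mul_const (B * B)).mono'
      (hφ'c.smul hVc).aestronglyMeasurable (.of_forall fun x => ?_)
    rw [norm_smul]
    exact mul_le_mul (norm_fderiv_phi_apply_le hδ0 hδ1 x e he) (hVB x) (norm_nonneg _)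
      (phi_pos x).le
  have i2 : Integrable fun x => phi d δ y x • fderiv ℝ V x e := by
    simp_rw [hVf]
    refine integrable_phi_smul (M := B * B + B * B) hd hδ0 hδ1 ?_ fun x => ?_
    · exact ((continuous_conj.comp hp.continuous).mul hp.continuous).add
        ((continuous_conj.comp hw.continuous).mul hlc)
    · refine (norm_add_le _ _).trans ?_
      rw [norm_mul, norm_mul, RCLike.norm_conj, RCLike.norm_conj]
      exact add_le_add (mul_le_mul (hpB x) (hpB x) (norm_nonneg _) hB0)
        (mul_le_mul (hB x).1 (hlB x) (norm_nonneg _) hB0)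
  have i3 : Integrable fun x => phi d δ y x • V x := integrable_phi_smul hd hδ0 hδ1 hVc hVB
  have hibp := integral_smul_fderiv_eq_neg_fderiv_smul_of_integrable i1 i2 i3
    (fun x _ => (contDiff_phi (n := 1)).differentiable (by norm_num) x)
    (fun x _ => (hVd x).differentiableAt)
  have hD : D = fun x => fderiv ℝ (phi d δ y) x e • V x + phi d δ y x • fderiv ℝ V x e := by
    funext x
    rw [hVf]
  rw [hD]
  refine ⟨i1.add i2, ?_⟩
  rw [integral_add i1 i2, hibp, add_neg_cancel]

lemma exists_bound_sq_sub_rpow {q : ℝ} (hq : 0 < q) {A : ℝ} (hA : 0 ≤ A) :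
    ∃ C : ℝ, 0 ≤ C ∧ ∀ s : ℝ, 0 ≤ s → A * s ^ 2 - 2 * s ^ (2 * q) * s ^ 2 ≤ C := by
  refine ⟨A * ((A / 2) ^ (1 / (2 * q))) ^ 2, by positivity, fun s hs => ?_⟩
  rcases le_total (A / 2) (s ^ (2 * q)) with h | h
  · have h1 : A * s ^ 2 ≤ 2 * s ^ (2 * q) * s ^ 2 := by
      gcongr
      linarith
    have h2 : 0 ≤ A * ((A / 2) ^ (1 / (2 * q))) ^ 2 := by positivity
    linarith
  · have h1 : s ≤ (A / 2) ^ (1 / (2 * q)) := by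
      have := Real.rpow_le_rpow (z := 1 / (2 * q)) (by positivity) h (by positivity)
      rwa [← Real.rpow_mul hs, mul_one_div_cancel (by positivity), Real.rpow_one] at this
    have h2 : A * s ^ 2 ≤ A * ((A / 2) ^ (1 / (2 * q))) ^ 2 := by gcongr
    have h3 : 0 ≤ 2 * s ^ (2 * q) * s ^ 2 := by positivity
    linarith

/-- Absorption of the commutator term with the gradient of the weight into the dissipation. -/
lemma weighted_dissipation_le {φ ψ : ℝ} (hψ : ‖ψ‖ ≤ φ) (c z p l : ℂ) (hc : c.re = 1) :
    φ * (2 * ⟪z, c * l⟫_ℝ) ≤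
      2 * (c * (ψ • (conj z * p) + φ • (conj p * p + conj z * l))).re +
        φ * (‖c‖ ^ 2 / 2 * ‖z‖ ^ 2) := by
  have hφ : 0 ≤ φ := (norm_nonneg _).trans hψ
  have h1 : |(c * (conj z * p)).re| ≤ ‖c‖ * (‖z‖ * ‖p‖) := by
    simpa using Complex.abs_re_le_norm (c * (conj z * p))
  have h2 : |ψ * (c * (conj z * p)).re| ≤ φ * (‖c‖ * (‖z‖ * ‖p‖)) := by
    rw [abs_mul]
    exact mul_le_mul hψ h1 (abs_nonneg _) hφ
  have h3 := (abs_le.1 h2).1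
  have h4 : 2 * (c * (ψ • (conj z * p) + φ • (conj p * p + conj z * l))).re =
      2 * (ψ * (c * (conj z * p)).re) + 2 * φ * ‖p‖ ^ 2 + φ * (2 * ⟪z, c * l⟫_ℝ) := by
    rw [Complex.inner, ← Complex.normSq_eq_norm_sq, Complex.normSq_apply]
    simp [Complex.add_re, Complex.mul_re, hc]
    ring
  rw [h4]
  nlinarith [mul_nonneg hφ (sq_nonneg (‖c‖ * ‖z‖ - 2 * ‖p‖))]

lemma weighted_GL_inner_le {d : ℕ} {φ : ℝ} {ψ : Fin d → ℝ} (hφ : 0 ≤ φ) (hψ : ∀ j, ‖ψ j‖ ≤ φ)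
    (α β N : ℝ) (z h : ℂ) (p l : Fin d → ℂ) :
    φ * (2 * ⟪z, (1 + Complex.I * (α : ℂ)) * ∑ j, l j + z -
        (1 + Complex.I * (β : ℂ)) * (N : ℂ) * z + h⟫_ℝ) ≤
      ∑ j, 2 * ((1 + Complex.I * (α : ℂ)) *
          (ψ j • (conj z * p j) + φ • (conj (p j) * p j + conj z * l j))).re +
        φ * ((d * (‖1 + Complex.I * (α : ℂ)‖ ^ 2 / 2) + 3) * ‖z‖ ^ 2 - 2 * N * ‖z‖ ^ 2 +
          ‖h‖ ^ 2) := by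
  set c := 1 + Complex.I * (α : ℂ) with hc
  have hc1 : c.re = 1 := by simp [hc]
  have h1 := Finset.sum_le_sum fun j (_ : j ∈ Finset.univ) =>
    weighted_dissipation_le (hψ j) c z (p j) (l j) hc1
  rw [Finset.sum_add_distrib, Finset.sum_const, Finset.card_univ, Fintype.card_fin,
    nsmul_eq_mul, ← Finset.mul_sum, ← Finset.mul_sum, ← inner_sum, ← Finset.mul_sum] at h1
  have h2 : ⟪z, (1 + Complex.I * (β : ℂ)) * (N : ℂ) * z⟫_ℝ = N * ‖z‖ ^ 2 := by
    rw [Complex.inner, ← Complex.normSq_eq_norm_sq, Complex.normSq_apply]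
    simp
    ring
  have h3 : 2 * ⟪z, h⟫_ℝ ≤ ‖z‖ ^ 2 + ‖h‖ ^ 2 := by
    nlinarith [real_inner_le_norm z h, sq_nonneg (‖z‖ - ‖h‖)]
  rw [inner_add_right, inner_sub_right, inner_add_right, h2, real_inner_self_eq_norm_sq]
  nlinarith [mul_le_mul_of_nonneg_left h3 hφ]

/-- The right-hand side of the Ginzburg–Landau equation with forcing `h`. -/
noncomputable def glField (d : ℕ) (q α β : ℝ) (h w : EuclideanSpace ℝ (Fin d) → ℂ)
    (x : EuclideanSpace ℝ (Fin d)) : ℂ :=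
  (1 + Complex.I * (α : ℂ)) * lap d w x + w x -
    (1 + Complex.I * (β : ℂ)) * ((‖w x‖ ^ (2 * q) : ℝ) : ℂ) * w x + h x

lemma continuous_glField {d : ℕ} {q α β : ℝ} (hq : 0 < q) {h w : EuclideanSpace ℝ (Fin d) → ℂ}
    (hh : Continuous h) (hw : ContDiff ℝ 2 w) : Continuous (glField d q α β h w) := by
  have hl : Continuous (lap d w) := continuous_finsetSum _ fun j _ =>
    (hw.continuous_iteratedFDeriv le_rfl).eval_const _
  have hN : Continuous fun x => ‖w x‖ ^ (2 * q) :=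
    hw.continuous.norm.rpow_const fun _ => Or.inr (by positivity)
  have hwc := hw.continuous
  unfold glField
  fun_prop

lemma norm_glField_le {d : ℕ} {q α β : ℝ} (hq : 0 < q) {h w : EuclideanSpace ℝ (Fin d) → ℂ}
    {B M : ℝ} {x : EuclideanSpace ℝ (Fin d)} (hw : ‖w x‖ ≤ B)
    (hw2 : ‖iteratedFDeriv ℝ 2 w x‖ ≤ B) (hh : ‖h x‖ ≤ M) :
    ‖glField d q α β h w x‖ ≤ ‖1 + Complex.I * (α : ℂ)‖ * (d * B) + B +
      ‖1 + Complex.I * (β : ℂ)‖ * B ^ (2 * q) * B + M := by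
  have hB0 : 0 ≤ B := (norm_nonneg _).trans hw
  have hl : ‖lap d w x‖ ≤ d * B := by
    refine (norm_sum_le_of_le (n := fun _ => B) Finset.univ fun j _ => ?_).trans (by simp)
    refine ((iteratedFDeriv ℝ 2 w x).le_opNorm _).trans ?_
    rw [Fin.prod_univ_two]
    simpa using hw2
  unfold glField
  refine (norm_add_le _ _).trans (add_le_add ((norm_sub_le _ _).trans
    (add_le_add ((norm_add_le _ _).trans (add_le_add ?_ hw)) ?_)) hh)
  · rw [norm_mul]
    gcongr
  · rw [norm_mul, norm_mul, Complex.norm_real, Real.norm_of_nonneg (by positivity)]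
    gcongr

/-- The weighted energy inequality at a fixed time. -/
lemma integral_weighted_glField_le {d : ℕ} {q α β δ A C : ℝ} {y : EuclideanSpace ℝ (Fin d)}
    (hd : d ≤ 2) (hq : 0 < q) (hδ0 : 0 < δ) (hδ1 : δ ≤ 1)
    (hA : A = d * (‖1 + Complex.I * (α : ℂ)‖ ^ 2 / 2) + 4)
    (hC : ∀ s : ℝ, 0 ≤ s → A * s ^ 2 - 2 * s ^ (2 * q) * s ^ 2 ≤ C)
    {h w : EuclideanSpace ℝ (Fin d) → ℂ} (hh : Continuous h) {M : ℝ} (hM : ∀ x, ‖h x‖ ≤ M)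
    (hw : ContDiff ℝ 2 w) {B : ℝ}
    (hB : ∀ x, ‖w x‖ ≤ B ∧ ‖fderiv ℝ w x‖ ≤ B ∧ ‖iteratedFDeriv ℝ 2 w x‖ ≤ B) :
    ∫ x, phi d δ y x * (2 * ⟪w x, glField d q α β h w x⟫_ℝ) ≤
      C * (∫ x, phi d δ y x) + (∫ x, phi d δ y x * ‖h x‖ ^ 2) -
        ∫ x, phi d δ y x * ‖w x‖ ^ 2 := by
  set c := 1 + Complex.I * (α : ℂ) with hc
  set e : Fin d → EuclideanSpace ℝ (Fin d) := fun j => EuclideanSpace.single j (1 : ℝ) with he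
  have he1 (j) : ‖e j‖ ≤ 1 := by simp [he]
  let D : Fin d → EuclideanSpace ℝ (Fin d) → ℂ := fun j x =>
    fderiv ℝ (phi d δ y) x (e j) • (conj (w x) * fderiv ℝ w x (e j)) +
      phi d δ y x • (conj (fderiv ℝ w x (e j)) * fderiv ℝ w x (e j) +
        conj (w x) * iteratedFDeriv ℝ 2 w x ![e j, e j])
  have hD (j) : Integrable (D j) ∧ ∫ x, D j x = 0 :=
    integral_weighted_div_eq_zero hd hδ0 hδ1 hw hB (he1 j)
  have iD (j) : Integrable fun x => 2 * (c * D j x).re :=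
    ((hD j).1.const_mul c).re.const_mul 2
  have zD (j) : ∫ x, 2 * (c * D j x).re = 0 := by
    rw [integral_const_mul]
    have h1 : ∫ x, (c * D j x).re = (∫ x, c * D j x).re := integral_re ((hD j).1.const_mul c)
    rw [h1, integral_const_mul, (hD j).2]
    simp
  have iφ : Integrable (phi d δ y) := integrable_phi hd hδ0 hδ1
  have ih : Integrable fun x => phi d δ y x * ‖h x‖ ^ 2 :=
    integrable_phi_smul (M := M ^ 2) hd hδ0 hδ1 (f := fun x => ‖h x‖ ^ 2) (by fun_prop) fun x => by
      rw [norm_pow, norm_norm]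
      exact pow_le_pow_left₀ (norm_nonneg _) (hM x) 2
  have hwc := hw.continuous
  have iw : Integrable fun x => phi d δ y x * ‖w x‖ ^ 2 :=
    integrable_phi_smul (M := B ^ 2) hd hδ0 hδ1 (f := fun x => ‖w x‖ ^ 2) (by fun_prop) fun x => by
      rw [norm_pow, norm_norm]
      exact pow_le_pow_left₀ (norm_nonneg _) (hB x).1 2
  have iS : Integrable fun x => ∑ j, 2 * (c * D j x).re := integrable_finsetSum _ fun j _ => iD j
  have iCh : Integrable fun x => C * phi d δ y x + phi d δ y x * ‖h x‖ ^ 2 :=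
    (iφ.const_mul C).add ih
  have iR : Integrable fun x => C * phi d δ y x + phi d δ y x * ‖h x‖ ^ 2 -
      phi d δ y x * ‖w x‖ ^ 2 := iCh.sub iw
  have hB0 : 0 ≤ B := (norm_nonneg _).trans (hB 0).1
  have hfc := continuous_glField (α := α) (β := β) hq hh hw
  have iL : Integrable fun x => phi d δ y x * (2 * ⟪w x, glField d q α β h w x⟫_ℝ) := by
    refine integrable_phi_smul hd hδ0 hδ1
      (M := 2 * (B * (‖c‖ * (d * B) + B + ‖1 + Complex.I * (β : ℂ)‖ * B ^ (2 * q) * B + M)))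
      (f := fun x => 2 * ⟪w x, glField d q α β h w x⟫_ℝ) (by fun_prop) fun x => ?_
    rw [norm_mul, Real.norm_two]
    gcongr
    exact (norm_inner_le_norm _ _).trans (mul_le_mul (hB x).1
      (norm_glField_le hq (hB x).1 (hB x).2.2 (hM x)) (norm_nonneg _) hB0)
  calc ∫ x, phi d δ y x * (2 * ⟪w x, glField d q α β h w x⟫_ℝ)
      ≤ ∫ x, (∑ j, 2 * (c * D j x).re) + (C * phi d δ y x + phi d δ y x * ‖h x‖ ^ 2 -
          phi d δ y x * ‖w x‖ ^ 2) := by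
        refine integral_mono iL (iS.add iR) fun x => ?_
        refine (weighted_GL_inner_le (phi_pos x).le
          (fun j => norm_fderiv_phi_apply_le hδ0 hδ1 x (e j) (he1 j)) α β (‖w x‖ ^ (2 * q))
          (w x) (h x) (fun j => fderiv ℝ w x (e j)) _).trans ?_
        refine add_le_add le_rfl ?_
        have h1 := mul_le_mul_of_nonneg_left (hC ‖w x‖ (norm_nonneg _))
          (phi_pos (δ := δ) (y := y) x).le
        rw [hA] at h1
        linarith
    _ = _ := by
        rw [integral_add iS iR, integral_finsetSum _ fun j _ => iD j,
          integral_sub iCh iw, integral_add (iφ.const_mul C) ih,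
          integral_const_mul]
        simp only [zD, Finset.sum_const_zero, zero_add]

lemma le_exp_neg_mul_add_of_deriv_le {E E' : ℝ → ℝ} {C : ℝ} (hC : 0 ≤ C)
    (hcont : ContinuousOn E (Set.Ici 0)) (hderiv : ∀ t, 0 < t → HasDerivAt E (E' t) t)
    (hle : ∀ t, 0 < t → E' t ≤ C - E t) {t : ℝ} (ht : 0 ≤ t) :
    E t ≤ Real.exp (-t) * E 0 + C := by
  have hd (t) (ht : 0 < t) : HasDerivAt (fun s => Real.exp s * (E s - C))
      (Real.exp t * (E t - C) + Real.exp t * E' t) t :=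
    (Real.hasDerivAt_exp t).mul ((hderiv t ht).sub_const C)
  have hanti : AntitoneOn (fun s => Real.exp s * (E s - C)) (Set.Ici 0) := by
    refine antitoneOn_of_deriv_nonpos (convex_Ici 0)
      (Real.continuous_exp.continuousOn.mul (hcont.sub continuousOn_const)) ?_ ?_
    · intro s hs
      rw [interior_Ici] at hs
      exact (hd s hs).differentiableAt.differentiableWithinAt
    · intro s hs
      rw [interior_Ici] at hs
      rw [(hd s hs).deriv, ← mul_add]
      exact mul_nonpos_of_nonneg_of_nonpos (Real.exp_pos s).le (by linarith [hle s hs])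
  have h := hanti (Set.self_mem_Ici) ht ht
  simp only [Real.exp_zero, one_mul] at h
  have h2 := mul_le_mul_of_nonneg_left h (Real.exp_pos (-t)).le
  rw [← mul_assoc, ← Real.exp_add, neg_add_cancel, Real.exp_zero, one_mul] at h2
  nlinarith [mul_nonneg (Real.exp_pos (-t)).le hC]

/-- A priori bound in weighted `L²`: there is a constant `C` (depending only on
`d, q, α, δ, G`) such that every bounded classical solution of the Ginzburg–Landau
equation with forcing of weighted `L²` norm at most `G` satisfies
`∫ φ_{δ,y} |u(t)|² ≤ e^{−t} ∫ φ_{δ,y} |u(0)|² + C` for all `t ≥ 0`. -/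
theorem weighted_L2_apriori_bound (d : ℕ) (hd1 : 1 ≤ d) (hd2 : d ≤ 2)
    (q : ℝ) (hq : 1 / 2 < q) (α : ℝ) (δ : ℝ) (hδ0 : 0 < δ) (hδ1 : δ ≤ 1)
    (G : ℝ) (hG : 0 < G) :
    ∃ C : ℝ, ∀ β : ℝ, ∀ y : EuclideanSpace ℝ (Fin d),
      ∀ g : EuclideanSpace ℝ (Fin d) → ℝ → ℂ,
      (∃ M : ℝ, ∀ x t, ‖g x t‖ ≤ M) →
      ContinuousOn (fun p : EuclideanSpace ℝ (Fin d) × ℝ => g p.1 p.2)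
        (Set.univ ×ˢ Set.Ici (0 : ℝ)) →
      (∀ t : ℝ, 0 ≤ t → (∫ x, phi d δ y x * ‖g x t‖ ^ 2) ≤ G) →
      ∀ u : EuclideanSpace ℝ (Fin d) → ℝ → ℂ,
      IsGLSolution d q α β (Set.Ici (0 : ℝ)) g u →
      ∀ t : ℝ, 0 ≤ t →
        (∫ x, phi d δ y x * ‖u x t‖ ^ 2) ≤
          Real.exp (-t) * (∫ x, phi d δ y x * ‖u x 0‖ ^ 2) + C := by
  have hq0 : 0 < q := by linarith
  obtain ⟨C₀, hC₀, hC⟩ := exists_bound_sq_sub_rpow hq0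
    (A := d * (‖1 + Complex.I * (α : ℂ)‖ ^ 2 / 2) + 4) (by positivity)
  refine ⟨C₀ * (∫ x, phi d δ 0 x) + G, fun β y g ⟨M, hM⟩ hg hgG u ⟨_, hu2, ⟨B, hB⟩, hut⟩
    t ht => ?_⟩
  have hB0 : 0 ≤ B := (norm_nonneg _).trans (hB 0 Set.self_mem_Ici 0).1
  have hgc (s : ℝ) (hs : 0 ≤ s) : Continuous fun x => g x s :=
    hg.comp_continuous (f := fun x => (x, s)) (by fun_prop) fun x => ⟨trivial, hs⟩
  have iφ : Integrable (phi d δ y) := integrable_phi hd2 hδ0 hδ1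
  have hEc (s : ℝ) (hs : 0 ≤ s) : Continuous fun x => phi d δ y x * ‖u x s‖ ^ 2 :=
    continuous_phi.mul ((hu2 s hs).continuous.norm.pow 2)
  have hEb (s : ℝ) (hs : 0 ≤ s) (x) : ‖phi d δ y x * ‖u x s‖ ^ 2‖ ≤ phi d δ y x * B ^ 2 := by
    rw [Real.norm_of_nonneg (mul_nonneg (phi_pos x).le (by positivity))]
    exact mul_le_mul_of_nonneg_left (pow_le_pow_left₀ (norm_nonneg _) (hB s hs x).1 2)
      (phi_pos x).le
  refine le_exp_neg_mul_add_of_deriv_le (E := fun s => ∫ x, phi d δ y x * ‖u x s‖ ^ 2)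
    (E' := fun s => ∫ x, phi d δ y x *
      (2 * ⟪u x s, glField d q α β (fun x => g x s) (fun x => u x s) x⟫_ℝ)) ?_ ?_ ?_ ?_ ht
  · exact add_nonneg (mul_nonneg hC₀ (integral_nonneg fun x => (phi_pos x).le)) hG.le
  · refine continuousOn_of_dominated (bound := fun x => phi d δ y x * B ^ 2)
      (fun s hs => (hEc s hs).aestronglyMeasurable) (fun s hs => .of_forall (hEb s hs))
      (iφ.mul_const _) (.of_forall fun x => ?_)
    have hxc : ContinuousOn (fun s => u x s) (Set.Ici 0) := fun s hs =>
      (hut x s hs).continuousWithinAt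
    exact continuousOn_const.mul (hxc.norm.pow 2)
  · intro s hs
    refine (hasDerivAt_integral_of_dominated_loc_of_deriv_le (s := Set.Ioi 0)
      (bound := fun x => phi d δ y x * (2 * (B * (‖1 + Complex.I * (α : ℂ)‖ * (d * B) + B +
        ‖1 + Complex.I * (β : ℂ)‖ * B ^ (2 * q) * B + M)))) (Ioi_mem_nhds hs) ?_ ?_
      (F' := fun s x => phi d δ y x *
        (2 * ⟪u x s, glField d q α β (fun x => g x s) (fun x => u x s) x⟫_ℝ)) ?_ ?_ ?_ ?_).2
    · filter_upwards [Ioi_mem_nhds hs] with r hr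
      exact (hEc r (le_of_lt hr)).aestronglyMeasurable
    · exact (iφ.mul_const _).mono' (hEc s hs.le).aestronglyMeasurable (.of_forall (hEb s hs.le))
    · have h1 := continuous_glField (α := α) (β := β) hq0 (hgc s hs.le) (hu2 s hs.le)
      exact (continuous_phi.mul (continuous_const.mul
        ((hu2 s hs.le).continuous.inner h1))).aestronglyMeasurable
    · refine .of_forall fun x r hr => ?_
      have hr0 : 0 ≤ r := le_of_lt hr
      rw [norm_mul, norm_mul, Real.norm_two, Real.norm_of_nonneg (phi_pos x).le]
      refine mul_le_mul_of_nonneg_left (mul_le_mul_of_nonneg_left ?_ zero_le_two) (phi_pos x).le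
      exact (norm_inner_le_norm _ _).trans (mul_le_mul (hB r hr0 x).1
        (norm_glField_le hq0 (hB r hr0 x).1 (hB r hr0 x).2.2 (hM x r)) (norm_nonneg _) hB0)
    · exact iφ.mul_const _
    · exact .of_forall fun x r hr =>
        (((hut x r (Set.Ioi_subset_Ici_self hr)).hasDerivAt (Ici_mem_nhds hr)).norm_sq).const_mul _
  · intro s hs
    have h1 := integral_weighted_glField_le (β := β) (y := y) hd2 hq0 hδ0 hδ1 rfl hC
      (hgc s hs.le) (fun x => hM x s) (hu2 s hs.le) (hB s hs.le)
    rw [integral_phi_eq] at h1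
    linarith [hgG s hs.le]
end

section
/- Let d ≤ 2, q > 1/2, α ∈ ℝ, β ∈ ℝ with |β| ≤ √(2q+1)/q, and M > 0. There exist constants C < ∞ and γ < ∞ (depending only on d, q, α, β, M) such that for all sufficiently small ε > 0, all t > 0 and all L > 0 with L' := L − C(1+t) log(1/ε) > 0, the following holds: if g : ℝ^d × [0,t] → ℂ is bounded and continuous, and u, v are bounded classical solutions on ℝ^d × [0,t] of the Ginzburg–Landau equation ∂_t w = (1+iα)Δw + w − (1+iβ)|w|^{2q}w + g with |u(x,s)| ≤ M and |v(x,s)| ≤ M for all (x,s), and if sup_{x ∈ Q_L} |u(x,0) − v(x,0)| ≤ ε, then sup_{x ∈ Q_{L'}} |u(x,t) − v(x,t)| ≤ C e^{γ t} ε. -/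
open Complex MeasureTheory

/-- Membership in the cube `Q_ℓ = [−ℓ/2, ℓ/2]^d`. -/
def inCube (d : ℕ) (ℓ : ℝ) (x : EuclideanSpace ℝ (Fin d)) : Prop :=
  ∀ j : Fin d, |x j| ≤ ℓ / 2

/-- The fundamental solution of `∂_τ G = κ Δ G` on `ℝ^d`, for `Re κ > 0`. -/
noncomputable def heatKernel (d : ℕ) (κ : ℂ) (τ : ℝ) (z : EuclideanSpace ℝ (Fin d)) : ℂ :=
  (4 * Real.pi * κ * τ) ^ ((-(d / 2) : ℝ) : ℂ) * cexp (-(κ⁻¹ / (4 * τ)) * ‖z‖ ^ 2)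

/-- The Laplacian in `z` of `heatKernel d κ τ z`. -/
noncomputable def heatKernelLap (d : ℕ) (κ : ℂ) (τ : ℝ) (z : EuclideanSpace ℝ (Fin d)) : ℂ :=
  (-(d * (κ⁻¹ / (2 * τ))) + (κ⁻¹ / (2 * τ)) ^ 2 * ‖z‖ ^ 2) * heatKernel d κ τ z

section Kernel

variable {d : ℕ} {κ : ℂ} {τ : ℝ}

theorem inv_re_pos_of_re_pos (hκ : 0 < κ.re) : 0 < κ⁻¹.re := by
  rw [Complex.inv_re]
  have : κ ≠ 0 := by rintro rfl; simp at hκ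
  exact div_pos hκ (Complex.normSq_pos.2 this)

theorem norm_heatKernel (hτ : 0 < τ) (z : EuclideanSpace ℝ (Fin d)) :
    ‖heatKernel d κ τ z‖ =
      (4 * Real.pi * ‖κ‖ * τ) ^ (-(d / 2) : ℝ) * Real.exp (-(κ⁻¹.re / (4 * τ)) * ‖z‖ ^ 2) := by
  rw [heatKernel, norm_mul, norm_cpow_real, Complex.norm_exp]
  congr 2
  · simp [abs_of_pos Real.pi_pos, abs_of_pos hτ]
  · have h1 : (-(κ⁻¹ / (4 * τ)) * ‖z‖ ^ 2 : ℂ) = ((-(1 / (4 * τ)) * ‖z‖ ^ 2 : ℝ) : ℂ) * κ⁻¹ := by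
      push_cast; ring
    rw [h1, Complex.re_ofReal_mul]
    ring

theorem integrable_exp_neg_mul_sq_norm {b : ℝ} (hb : 0 < b) :
    Integrable fun z : EuclideanSpace ℝ (Fin d) => Real.exp (-b * ‖z‖ ^ 2) := by
  have h := (GaussianFourier.integrable_cexp_neg_mul_sq_norm_add (b := (b : ℂ)) (by simpa using hb)
    0 (0 : EuclideanSpace ℝ (Fin d))).norm
  refine h.congr (Filter.Eventually.of_forall fun z => ?_)
  simp only [Complex.norm_exp]
  congr 1
  have : (-(b : ℂ) * ‖z‖ ^ 2 + 0 * (inner ℝ (0 : EuclideanSpace ℝ (Fin d)) z : ℝ) : ℂ)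
      = ((-b * ‖z‖ ^ 2 : ℝ) : ℂ) := by push_cast; ring
  rw [this, Complex.ofReal_re]

theorem continuous_heatKernel : Continuous (heatKernel d κ τ) := by
  unfold heatKernel; fun_prop

theorem continuous_heatKernelLap : Continuous (heatKernelLap d κ τ) := by
  unfold heatKernelLap
  have := continuous_heatKernel (d := d) (κ := κ) (τ := τ)
  fun_prop

theorem integral_heatKernel (hκ : 0 < κ.re) (hτ : 0 < τ) :
    ∫ z, heatKernel d κ τ z = 1 := by
  have hκ0 := ne_zero_of_re_pos hκ
  have hτ' : (τ : ℂ) ≠ 0 := by exact_mod_cast hτ.ne'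
  have hb : 0 < (κ⁻¹ / (4 * τ) : ℂ).re := by
    have h1 : (κ⁻¹ / (4 * τ) : ℂ) = ((1 / (4 * τ) : ℝ) : ℂ) * κ⁻¹ := by push_cast; ring
    rw [h1, Complex.re_ofReal_mul]
    have := inv_re_pos_of_re_pos hκ
    positivity
  have hpi : (Real.pi : ℂ) ≠ 0 := by exact_mod_cast Real.pi_ne_zero
  simp only [heatKernel]
  rw [integral_const_mul, GaussianFourier.integral_cexp_neg_mul_sq_norm hb]
  have h2 : (Real.pi / (κ⁻¹ / (4 * τ)) : ℂ) = 4 * Real.pi * κ * τ := by field_simp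
  rw [h2, finrank_euclideanSpace_fin, ← Complex.cpow_add _ _ (by simp [hpi, hκ0, hτ'])]
  simp

theorem integral_gaussian_ratio (hκ : 0 < κ.re) (hτ : 0 < τ) :
    (4 * Real.pi * ‖κ‖ * τ) ^ (-(d / 2) : ℝ) *
      ∫ z : EuclideanSpace ℝ (Fin d), Real.exp (-(κ⁻¹.re / (8 * τ)) * ‖z‖ ^ 2) =
      (2 / (κ⁻¹.re * ‖κ‖)) ^ (d / 2 : ℝ) := by
  have hρ := inv_re_pos_of_re_pos hκ
  have hn : 0 < ‖κ‖ := norm_pos_iff.2 (ne_zero_of_re_pos hκ)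
  rw [GaussianFourier.integral_rexp_neg_mul_sq_norm (by positivity), finrank_euclideanSpace_fin,
    Real.rpow_neg (by positivity), ← Real.inv_rpow (by positivity),
    ← Real.mul_rpow (by positivity) (by positivity)]
  congr 1
  have := Real.pi_pos
  field_simp
  norm_num

/-- Exponentially weighted `L¹` bound for the kernel. -/
theorem integral_norm_heatKernel_mul_exp (hκ : 0 < κ.re) (hτ : 0 < τ) :
    Integrable (fun z => ‖heatKernel d κ τ z‖ * Real.exp ‖z‖) ∧
    ∫ z, ‖heatKernel d κ τ z‖ * Real.exp ‖z‖ ≤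
      (2 / (κ⁻¹.re * ‖κ‖)) ^ (d / 2 : ℝ) * Real.exp (2 / κ⁻¹.re * τ) := by
  have hρ := inv_re_pos_of_re_pos hκ
  set ρ := κ⁻¹.re
  set N := (4 * Real.pi * ‖κ‖ * τ) ^ (-(d / 2) : ℝ) with hN
  have hN0 : 0 ≤ N := by positivity
  have hint : Integrable fun z : EuclideanSpace ℝ (Fin d) =>
      (N * Real.exp (2 / ρ * τ)) * Real.exp (-(ρ / (8 * τ)) * ‖z‖ ^ 2) :=
    (integrable_exp_neg_mul_sq_norm (by positivity)).const_mul _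
  have hle : ∀ z, ‖heatKernel d κ τ z‖ * Real.exp ‖z‖ ≤
      (N * Real.exp (2 / ρ * τ)) * Real.exp (-(ρ / (8 * τ)) * ‖z‖ ^ 2) := by
    intro z
    rw [norm_heatKernel hτ, ← hN, mul_assoc N, mul_assoc N, ← Real.exp_add, ← Real.exp_add]
    refine mul_le_mul_of_nonneg_left (Real.exp_le_exp.2 ?_) hN0
    have h : 0 ≤ (ρ * ‖z‖ - 4 * τ) ^ 2 / (8 * τ * ρ) := by positivity
    have h2 : (ρ * ‖z‖ - 4 * τ) ^ 2 / (8 * τ * ρ) =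
      2 / ρ * τ + -(ρ / (8 * τ)) * ‖z‖ ^ 2 - (-(ρ / (4 * τ)) * ‖z‖ ^ 2 + ‖z‖) := by
      field_simp; ring
    change -(ρ / (4 * τ)) * ‖z‖ ^ 2 + ‖z‖ ≤ _
    linarith
  have hI : Integrable (fun z => ‖heatKernel d κ τ z‖ * Real.exp ‖z‖) := by
    refine hint.mono' ?_ (Filter.Eventually.of_forall fun z => ?_)
    · exact (continuous_heatKernel.norm.mul (by fun_prop)).aestronglyMeasurable
    · rw [Real.norm_of_nonneg (by positivity)]; exact hle z
  refine ⟨hI, (integral_mono hI hint hle).trans_eq ?_⟩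
  rw [integral_const_mul, mul_right_comm, integral_gaussian_ratio hκ hτ]

theorem one_add_mul_exp_neg_le {b r : ℝ} (hb : 0 < b) (hr : 0 ≤ r) :
    (1 + r) * Real.exp (-(2 * b) * r) ≤ (1 + 1 / b) * Real.exp (-b * r) := by
  have h1 : -(2 * b) * r = -b * r + -b * r := by ring
  rw [h1, Real.exp_add, ← mul_assoc]
  gcongr
  have h2 : b * r ≤ Real.exp (b * r) := by linarith [Real.add_one_le_exp (b * r)]
  have h3 : 1 ≤ Real.exp (b * r) := Real.one_le_exp (by positivity)
  have h4 : r ≤ 1 / b * Real.exp (b * r) := by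
    rw [one_div, inv_mul_eq_div, le_div_iff₀ hb]; linarith
  rw [neg_mul, Real.exp_neg, ← div_eq_mul_inv, div_le_iff₀ (Real.exp_pos _)]
  linarith

/-- Uniform Gaussian domination of the kernel on compact time intervals. -/
theorem exists_heatKernel_dominated (hκ : 0 < κ.re) {τ₀ τ₁ : ℝ} (h₀ : 0 < τ₀) (h₁ : τ₀ ≤ τ₁) :
    ∃ C b : ℝ, 0 < b ∧ 0 ≤ C ∧ ∀ τ ∈ Set.Icc τ₀ τ₁, ∀ z : EuclideanSpace ℝ (Fin d),
      (1 + ‖z‖ ^ 2) * ‖heatKernel d κ τ z‖ ≤ C * Real.exp (-b * ‖z‖ ^ 2) := by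
  have hρ := inv_re_pos_of_re_pos hκ
  have hn : 0 < ‖κ‖ := norm_pos_iff.2 (ne_zero_of_re_pos hκ)
  have hτ₁ : 0 < τ₁ := h₀.trans_le h₁
  set b := κ⁻¹.re / (8 * τ₁) with hb
  have hb0 : 0 < b := by positivity
  refine ⟨(4 * Real.pi * ‖κ‖ * τ₀) ^ (-(d / 2) : ℝ) * (1 + 1 / b), b, hb0, by positivity, ?_⟩
  intro τ hτ z
  have hτ0 : 0 < τ := h₀.trans_le hτ.1
  rw [norm_heatKernel hτ0]
  have e1 : (4 * Real.pi * ‖κ‖ * τ) ^ (-(d / 2) : ℝ) ≤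
      (4 * Real.pi * ‖κ‖ * τ₀) ^ (-(d / 2) : ℝ) := by
    apply Real.rpow_le_rpow_of_nonpos
    · positivity
    · have := hτ.1; gcongr
    · have : (0 : ℝ) ≤ d := Nat.cast_nonneg d
      linarith
  have e2 : Real.exp (-(κ⁻¹.re / (4 * τ)) * ‖z‖ ^ 2) ≤ Real.exp (-(2 * b) * ‖z‖ ^ 2) := by
    have : 2 * b = κ⁻¹.re / (4 * τ₁) := by rw [hb]; ring
    rw [this]
    have := hτ.2
    gcongr
  calc (1 + ‖z‖ ^ 2) * ((4 * Real.pi * ‖κ‖ * τ) ^ (-(d / 2) : ℝ) *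
          Real.exp (-(κ⁻¹.re / (4 * τ)) * ‖z‖ ^ 2))
      ≤ (1 + ‖z‖ ^ 2) * ((4 * Real.pi * ‖κ‖ * τ₀) ^ (-(d / 2) : ℝ) *
          Real.exp (-(2 * b) * ‖z‖ ^ 2)) := by gcongr
    _ = (4 * Real.pi * ‖κ‖ * τ₀) ^ (-(d / 2) : ℝ) *
          ((1 + ‖z‖ ^ 2) * Real.exp (-(2 * b) * ‖z‖ ^ 2)) := by ring
    _ ≤ (4 * Real.pi * ‖κ‖ * τ₀) ^ (-(d / 2) : ℝ) *
          ((1 + 1 / b) * Real.exp (-b * ‖z‖ ^ 2)) := by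
        gcongr ?_ * ?_
        exact one_add_mul_exp_neg_le hb0 (by positivity)
    _ = _ := by ring

theorem integrable_one_add_sq_mul_heatKernel (hκ : 0 < κ.re) (hτ : 0 < τ) :
    Integrable fun z : EuclideanSpace ℝ (Fin d) => (1 + ‖z‖ ^ 2) * ‖heatKernel d κ τ z‖ := by
  obtain ⟨C, b, hb, -, h⟩ := exists_heatKernel_dominated (d := d) hκ hτ le_rfl
  refine ((integrable_exp_neg_mul_sq_norm hb).const_mul C).mono' ?_
    (Filter.Eventually.of_forall fun z => ?_)
  · have := continuous_heatKernel (d := d) (κ := κ) (τ := τ)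
    exact Continuous.aestronglyMeasurable (by fun_prop)
  · rw [Real.norm_of_nonneg (by positivity)]
    exact h τ ⟨le_rfl, le_rfl⟩ z

/-- Continuous functions of Gaussian-times-quadratic size are integrable. -/
theorem integrable_of_norm_le_heatKernel (hκ : 0 < κ.re) (hτ : 0 < τ)
    {h : EuclideanSpace ℝ (Fin d) → ℂ} (hc : Continuous h) (K : ℝ)
    (hK : ∀ z, ‖h z‖ ≤ K * ((1 + ‖z‖ ^ 2) * ‖heatKernel d κ τ z‖)) : Integrable h :=
  ((integrable_one_add_sq_mul_heatKernel hκ hτ).const_mul K).mono' hc.aestronglyMeasurable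
    (Filter.Eventually.of_forall hK)

/-- The kernel is an approximate identity, quantitatively on Lipschitz functions. -/
theorem norm_integral_heatKernel_mul_sub_le (hκ : 0 < κ.re) (hτ : 0 < τ)
    {f : EuclideanSpace ℝ (Fin d) → ℂ} (hf : Continuous f) {B : ℝ} (hB : ∀ z, ‖f z‖ ≤ B)
    (hL : ∀ z, ‖f z - f 0‖ ≤ B * ‖z‖) :
    ‖(∫ z, heatKernel d κ τ z * f z) - f 0‖ ≤
      B * (1 + 8 / κ⁻¹.re) * (2 / (κ⁻¹.re * ‖κ‖)) ^ (d / 2 : ℝ) * √τ := by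
  have hρ := inv_re_pos_of_re_pos hκ
  have hB0 : 0 ≤ B := (norm_nonneg _).trans (hB 0)
  have hG := continuous_heatKernel (d := d) (κ := κ) (τ := τ)
  have i1 : Integrable fun z => heatKernel d κ τ z * f z := by
    refine integrable_of_norm_le_heatKernel hκ hτ (by fun_prop) B fun z => ?_
    rw [norm_mul, mul_comm]
    have : ‖heatKernel d κ τ z‖ ≤ (1 + ‖z‖ ^ 2) * ‖heatKernel d κ τ z‖ :=
      le_mul_of_one_le_left (norm_nonneg _) (by nlinarith [sq_nonneg ‖z‖])
    exact mul_le_mul (hB z) this (norm_nonneg _) hB0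
  have i2 : Integrable fun z => heatKernel d κ τ z * f 0 := by
    refine Integrable.mul_const ?_ _
    refine integrable_of_norm_le_heatKernel hκ hτ hG 1 fun z => ?_
    rw [one_mul]
    exact le_mul_of_one_le_left (norm_nonneg _) (by nlinarith [sq_nonneg ‖z‖])
  have e : (∫ z, heatKernel d κ τ z * f z) - f 0 = ∫ z, heatKernel d κ τ z * (f z - f 0) := by
    simp_rw [mul_sub]
    rw [integral_sub i1 i2, integral_mul_const, integral_heatKernel hκ hτ, one_mul]
  rw [e]
  set N := (4 * Real.pi * ‖κ‖ * τ) ^ (-(d / 2) : ℝ) with hN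
  have hN0 : 0 ≤ N := by positivity
  have hint : Integrable fun z : EuclideanSpace ℝ (Fin d) =>
      (B * (1 + 8 / κ⁻¹.re) * √τ * N) * Real.exp (-(κ⁻¹.re / (8 * τ)) * ‖z‖ ^ 2) :=
    (integrable_exp_neg_mul_sq_norm (by positivity)).const_mul _
  refine (norm_integral_le_of_norm_le hint (Filter.Eventually.of_forall fun z => ?_)).trans_eq ?_
  · rw [norm_mul, norm_heatKernel hτ, ← hN]
    have hs : 0 < √τ := Real.sqrt_pos.2 hτ
    have hss : √τ * √τ = τ := Real.mul_self_sqrt hτ.le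
    have h1 : ‖z‖ ≤ √τ * (1 + ‖z‖ ^ 2 / τ) := by
      have : √τ * (1 + ‖z‖ ^ 2 / τ) = √τ + ‖z‖ ^ 2 / √τ := by
        nth_rewrite 2 [← hss]; field_simp
      rw [this]
      have h3 : ‖z‖ ^ 2 / √τ + √τ - 2 * ‖z‖ = (‖z‖ - √τ) ^ 2 / √τ := by field_simp; ring
      have : 0 ≤ (‖z‖ - √τ) ^ 2 / √τ := by positivity
      linarith [norm_nonneg z]
    have h2 := one_add_mul_exp_neg_le (b := κ⁻¹.re / 8) (r := ‖z‖ ^ 2 / τ)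
      (by positivity) (by positivity)
    have h4 : -(2 * (κ⁻¹.re / 8)) * (‖z‖ ^ 2 / τ) = -(κ⁻¹.re / (4 * τ)) * ‖z‖ ^ 2 := by
      ring
    have h5 : -(κ⁻¹.re / 8) * (‖z‖ ^ 2 / τ) = -(κ⁻¹.re / (8 * τ)) * ‖z‖ ^ 2 := by
      field_simp
    rw [h4, h5, one_div_div] at h2
    calc N * Real.exp (-(κ⁻¹.re / (4 * τ)) * ‖z‖ ^ 2) * ‖f z - f 0‖
        ≤ N * Real.exp (-(κ⁻¹.re / (4 * τ)) * ‖z‖ ^ 2) * (B * (√τ * (1 + ‖z‖ ^ 2 / τ))) := by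
          gcongr
          exact (hL z).trans (by gcongr)
      _ = (N * B * √τ) * ((1 + ‖z‖ ^ 2 / τ) * Real.exp (-(κ⁻¹.re / (4 * τ)) * ‖z‖ ^ 2)) := by
          ring
      _ ≤ (N * B * √τ) * ((1 + 8 / κ⁻¹.re) * Real.exp (-(κ⁻¹.re / (8 * τ)) * ‖z‖ ^ 2)) := by
          gcongr
      _ = _ := by ring
  · rw [integral_const_mul, ← integral_gaussian_ratio hκ hτ, ← hN]
    ring

theorem hasDerivAt_heatKernel_time (hκ : 0 < κ.re) (hτ : 0 < τ)
    (z : EuclideanSpace ℝ (Fin d)) :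
    HasDerivAt (fun r : ℝ => heatKernel d κ r z) (κ * heatKernelLap d κ τ z) τ := by
  have hκ0 := ne_zero_of_re_pos hκ
  have hτ' : (τ : ℂ) ≠ 0 := by exact_mod_cast hτ.ne'
  have hpi : (Real.pi : ℂ) ≠ 0 := by exact_mod_cast Real.pi_ne_zero
  have hc : HasDerivAt (fun r : ℝ => (r : ℂ)) 1 τ := Complex.ofRealCLM.hasDerivAt
  have h1 : HasDerivAt (fun r : ℂ => 4 * Real.pi * κ * r) (4 * Real.pi * κ) (τ : ℂ) := by
    simpa using (hasDerivAt_id (τ : ℂ)).const_mul (4 * Real.pi * κ)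
  have hs : (4 * Real.pi * κ * τ : ℂ) ∈ slitPlane := by
    left
    have : (4 * Real.pi * κ * τ : ℂ) = ((4 * Real.pi * τ : ℝ) : ℂ) * κ := by push_cast; ring
    rw [this, Complex.re_ofReal_mul]
    have := Real.pi_pos
    positivity
  have h2 := (h1.cpow_const (c := ((-(d / 2) : ℝ) : ℂ)) hs).comp_ofReal
  have h3 : HasDerivAt (fun r : ℝ => (-(κ⁻¹ / (4 * r)) * ‖z‖ ^ 2 : ℂ))
      (κ⁻¹ / (4 * τ ^ 2) * ‖z‖ ^ 2) τ := by
    have := (((hc.const_mul 4).inv (by simpa using hτ')).const_mul κ⁻¹).neg.mul_const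
      ((‖z‖ : ℂ) ^ 2)
    convert! this using 1
    field_simp
  have h4 := h2.mul h3.cexp
  refine h4.congr_deriv ?_
  have hp : (4 * Real.pi * κ * τ : ℂ) ^ (((-(d / 2) : ℝ) : ℂ) - 1) =
      (4 * Real.pi * κ * τ : ℂ) ^ ((-(d / 2) : ℝ) : ℂ) / (4 * Real.pi * κ * τ) := by
    rw [Complex.cpow_sub _ _ (by simp [hpi, hκ0, hτ']), Complex.cpow_one]
  rw [hp, heatKernelLap, heatKernel]
  push_cast
  field_simp
  ring

theorem hasLineDerivAt_heatKernel (j : Fin d) (z : EuclideanSpace ℝ (Fin d)) :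
    HasLineDerivAt ℝ (heatKernel d κ τ) (-(κ⁻¹ / (2 * τ)) * z j * heatKernel d κ τ z) z
      (EuclideanSpace.single j (1 : ℝ)) := by
  have hn : HasFDerivAt (fun x : EuclideanSpace ℝ (Fin d) => ‖x‖ ^ 2) (2 • innerSL ℝ z) z :=
    (hasStrictFDerivAt_norm_sq z).hasFDerivAt
  have h1 := (hn.hasLineDerivAt (EuclideanSpace.single j (1 : ℝ)))
  have h2 : HasDerivAt (fun r : ℝ => ‖z + r • EuclideanSpace.single j (1 : ℝ)‖ ^ 2) (2 * z j) 0 := by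
    refine HasDerivAt.congr_deriv h1 ?_
    simp [EuclideanSpace.inner_single_right, two_mul]
  have h3 := ((h2.ofReal_comp.const_mul (-(κ⁻¹ / (4 * τ)))).cexp).const_mul
    ((4 * Real.pi * κ * τ : ℂ) ^ ((-(d / 2) : ℝ) : ℂ))
  unfold HasLineDerivAt
  simp only [heatKernel]
  simp only [Complex.ofReal_pow] at h3
  refine h3.congr_deriv ?_
  simp only [zero_smul, add_zero]
  push_cast
  ring

theorem hasLineDerivAt_mul_heatKernel (j : Fin d) (z : EuclideanSpace ℝ (Fin d)) :
    HasLineDerivAt ℝ (fun x => -(κ⁻¹ / (2 * τ)) * x j * heatKernel d κ τ x)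
      ((-(κ⁻¹ / (2 * τ)) + (κ⁻¹ / (2 * τ)) ^ 2 * (z j : ℂ) ^ 2) * heatKernel d κ τ z) z
      (EuclideanSpace.single j (1 : ℝ)) := by
  have h1 : HasDerivAt (fun r : ℝ => heatKernel d κ τ (z + r • EuclideanSpace.single j (1 : ℝ)))
    _ 0 := hasLineDerivAt_heatKernel j z
  have h2 : HasDerivAt (fun r : ℝ =>
      (((z + r • EuclideanSpace.single j (1 : ℝ) : EuclideanSpace ℝ (Fin d)) j : ℝ) : ℂ)) 1 0 := by
    have : HasDerivAt (fun r : ℝ => (((z j + r : ℝ)) : ℂ)) 1 0 := by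
      simpa using ((hasDerivAt_id (0 : ℝ)).const_add (z j)).ofReal_comp
    simpa using this
  have h3 := ((h2.const_mul (-(κ⁻¹ / (2 * τ)))).mul h1)
  refine HasDerivAt.congr_deriv h3 ?_
  simp
  ring

theorem sum_lineDeriv_heatKernel (z : EuclideanSpace ℝ (Fin d)) :
    ∑ j : Fin d, (-(κ⁻¹ / (2 * τ)) + (κ⁻¹ / (2 * τ)) ^ 2 * (z j : ℂ) ^ 2) * heatKernel d κ τ z =
      heatKernelLap d κ τ z := by
  rw [← Finset.sum_mul, Finset.sum_add_distrib, ← Finset.mul_sum, heatKernelLap]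
  have : (‖z‖ : ℂ) ^ 2 = ∑ j : Fin d, (z j : ℂ) ^ 2 := by
    have h := EuclideanSpace.real_norm_sq_eq z
    exact_mod_cast congrArg (fun r : ℝ => (r : ℂ)) h
  rw [this]
  simp

/-- Green's formula against the kernel for `C²` functions with bounded derivatives. -/
theorem integral_heatKernel_mul_lap (hκ : 0 < κ.re) (hτ : 0 < τ)
    {f : EuclideanSpace ℝ (Fin d) → ℂ} (hf : ContDiff ℝ 2 f) {B : ℝ}
    (hB : ∀ x, ‖f x‖ ≤ B ∧ ‖fderiv ℝ f x‖ ≤ B ∧ ‖iteratedFDeriv ℝ 2 f x‖ ≤ B) :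
    ∫ z, heatKernel d κ τ z * lap d f z = ∫ z, heatKernelLap d κ τ z * f z := by
  have hB0 : 0 ≤ B := (norm_nonneg _).trans (hB 0).1
  have hG := continuous_heatKernel (d := d) (κ := κ) (τ := τ)
  set c : ℂ := κ⁻¹ / (2 * τ) with hc
  have hf1 : ContDiff ℝ 1 (fderiv ℝ f) := hf.fderiv_right (by norm_num)
  have hfc : Continuous f := hf.continuous
  have hd : Continuous (fderiv ℝ f) := hf1.continuous
  have hd2 : Continuous (fderiv ℝ (fderiv ℝ f)) := hf1.continuous_fderiv (by norm_num)
  have hn : ∀ j : Fin d, ‖(EuclideanSpace.single j (1 : ℝ) : EuclideanSpace ℝ (Fin d))‖ = 1 := by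
    intro j; simp
  have hcoord : ∀ (z : EuclideanSpace ℝ (Fin d)) (j : Fin d), ‖(z j : ℂ)‖ ^ 2 ≤ ‖z‖ ^ 2 := by
    intro z j
    rw [Complex.norm_real]
    have := PiLp.norm_apply_le z j
    gcongr
  set D1 : Fin d → EuclideanSpace ℝ (Fin d) → ℂ :=
    fun j z => fderiv ℝ f z (EuclideanSpace.single j (1 : ℝ)) with hD1
  set D2 : Fin d → EuclideanSpace ℝ (Fin d) → ℂ := fun j z => iteratedFDeriv ℝ 2 f z
    ![EuclideanSpace.single j (1 : ℝ), EuclideanSpace.single j (1 : ℝ)] with hD2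
  have hD2eq : ∀ j z, D2 j z = fderiv ℝ (fderiv ℝ f) z (EuclideanSpace.single j (1 : ℝ))
      (EuclideanSpace.single j (1 : ℝ)) := by
    intro j z; simp [hD2, iteratedFDeriv_two_apply]
  have hD1c : ∀ j, Continuous (D1 j) := fun j => by simp only [hD1]; fun_prop
  have hD2c : ∀ j, Continuous (D2 j) := fun j =>
    (continuous_congr (hD2eq j)).2 (by fun_prop)
  have hD1b : ∀ j z, ‖D1 j z‖ ≤ B := fun j z => by
    refine ((fderiv ℝ f z).le_opNorm _).trans ?_
    rw [hn, mul_one]; exact (hB z).2.1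
  have hD2b : ∀ j z, ‖D2 j z‖ ≤ B := fun j z => by
    refine ((iteratedFDeriv ℝ 2 f z).le_opNorm _).trans ?_
    simpa [Fin.prod_univ_two, hn] using (hB z).2.2
  have hline1 : ∀ j z, HasLineDerivAt ℝ f (D1 j z) z (EuclideanSpace.single j (1 : ℝ)) :=
    fun j z => (hf.differentiable (by norm_num) z).hasFDerivAt.hasLineDerivAt _
  have hline2 : ∀ j z, HasLineDerivAt ℝ (D1 j) (D2 j z) z (EuclideanSpace.single j (1 : ℝ)) := by
    intro j z
    have h := ((hf1.differentiable (by norm_num) z).hasFDerivAt).clm_apply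
      (hasFDerivAt_const (EuclideanSpace.single j (1 : ℝ)) z)
    have h' := h.hasLineDerivAt (EuclideanSpace.single j (1 : ℝ))
    rw [hD2eq]
    simpa using h'
  have hint : ∀ (p h : EuclideanSpace ℝ (Fin d) → ℂ) (K : ℝ), Continuous p → Continuous h →
      0 ≤ K → (∀ z, ‖p z‖ ≤ K * (1 + ‖z‖ ^ 2)) → (∀ z, ‖h z‖ ≤ B) →
      Integrable fun z => (p z * heatKernel d κ τ z) * h z := by
    intro p h K hp hh hK hpb hhb
    refine integrable_of_norm_le_heatKernel hκ hτ (by fun_prop) (K * B) fun z => ?_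
    rw [norm_mul, norm_mul]
    calc ‖p z‖ * ‖heatKernel d κ τ z‖ * ‖h z‖
        ≤ (K * (1 + ‖z‖ ^ 2)) * ‖heatKernel d κ τ z‖ * B := by
          gcongr
          · exact hpb z
          · exact hhb z
      _ = _ := by ring
  have hp0 : ∀ h : EuclideanSpace ℝ (Fin d) → ℂ, Continuous h → (∀ z, ‖h z‖ ≤ B) →
      Integrable fun z => heatKernel d κ τ z * h z := by
    intro h hh hhb
    have := hint (fun _ => 1) h 1 (by fun_prop) hh zero_le_one
      (fun z => by simp) hhb
    simpa using this
  have hp1 : ∀ j, ∀ h : EuclideanSpace ℝ (Fin d) → ℂ, Continuous h → (∀ z, ‖h z‖ ≤ B) →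
      Integrable fun z => (-c * z j * heatKernel d κ τ z) * h z := by
    intro j h hh hhb
    refine hint (fun z => -c * z j) h ‖c‖ (by fun_prop) hh (norm_nonneg _) (fun z => ?_) hhb
    rw [norm_mul, norm_neg]
    gcongr
    nlinarith [hcoord z j, sq_nonneg (‖(z j : ℂ)‖ - 1)]
  have hp2 : ∀ j, ∀ h : EuclideanSpace ℝ (Fin d) → ℂ, Continuous h → (∀ z, ‖h z‖ ≤ B) →
      Integrable fun z => ((-c + c ^ 2 * (z j : ℂ) ^ 2) * heatKernel d κ τ z) * h z := by
    intro j h hh hhb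
    refine hint (fun z => -c + c ^ 2 * (z j : ℂ) ^ 2) h (‖c‖ + ‖c‖ ^ 2) (by fun_prop) hh
      (by positivity) (fun z => ?_) hhb
    refine (norm_add_le _ _).trans ?_
    rw [norm_neg, norm_mul, norm_pow, norm_pow]
    have h1 : ‖c‖ ^ 2 * ‖(z j : ℂ)‖ ^ 2 ≤ ‖c‖ ^ 2 * ‖z‖ ^ 2 := 
      mul_le_mul_of_nonneg_left (hcoord z j) (by positivity)
    have h2 : 0 ≤ ‖c‖ * ‖z‖ ^ 2 := by positivity
    nlinarith [sq_nonneg ‖c‖]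
  have key : ∀ j, ∫ z, heatKernel d κ τ z * D2 j z =
      ∫ z, ((-c + c ^ 2 * (z j : ℂ) ^ 2) * heatKernel d κ τ z) * f z := by
    intro j
    have s1 := integral_bilinear_hasLineDerivAt_right_eq_neg_left_of_integrable
      (μ := (volume : Measure (EuclideanSpace ℝ (Fin d)))) (B := ContinuousLinearMap.mul ℝ ℂ)
      (f := heatKernel d κ τ) (g := D1 j) (g' := D2 j)
      (v := EuclideanSpace.single j (1 : ℝ))
      (f' := fun z => -c * z j * heatKernel d κ τ z)
      (hp1 j _ (hD1c j) (hD1b j)) (hp0 _ (hD2c j) (hD2b j)) (hp0 _ (hD1c j) (hD1b j))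
      (fun z _ => hasLineDerivAt_heatKernel j z) (fun z _ => hline2 j z)
    have s2 := integral_bilinear_hasLineDerivAt_right_eq_neg_left_of_integrable
      (μ := (volume : Measure (EuclideanSpace ℝ (Fin d)))) (B := ContinuousLinearMap.mul ℝ ℂ)
      (f := fun z => -c * z j * heatKernel d κ τ z) (g := f) (g' := D1 j)
      (v := EuclideanSpace.single j (1 : ℝ))
      (f' := fun z => (-c + c ^ 2 * (z j : ℂ) ^ 2) * heatKernel d κ τ z)
      (hp2 j _ hfc fun z => (hB z).1) (hp1 j _ (hD1c j) (hD1b j)) (hp1 j _ hfc fun z => (hB z).1)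
      (fun z _ => hasLineDerivAt_mul_heatKernel j z) (fun z _ => hline1 j z)
    simp only [ContinuousLinearMap.mul_apply'] at s1 s2
    rw [s1, s2, neg_neg]
  have e1 : ∀ z, heatKernel d κ τ z * lap d f z = ∑ j, heatKernel d κ τ z * D2 j z := by
    intro z; rw [lap, Finset.mul_sum]
  have e2 : ∀ z, heatKernelLap d κ τ z * f z =
      ∑ j : Fin d, ((-c + c ^ 2 * (z j : ℂ) ^ 2) * heatKernel d κ τ z) * f z := by
    intro z; rw [← sum_lineDeriv_heatKernel, Finset.sum_mul]
  simp_rw [e1, e2]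
  rw [integral_finsetSum _ fun j _ => hp0 _ (hD2c j) (hD2b j),
    integral_finsetSum _ fun j _ => hp2 j _ hfc fun z => (hB z).1]
  exact Finset.sum_congr rfl fun j _ => key j

theorem continuous_lap {f : EuclideanSpace ℝ (Fin d) → ℂ} (hf : ContDiff ℝ 2 f) :
    Continuous (lap d f) := by
  have h : Continuous (iteratedFDeriv ℝ 2 f) := hf.continuous_iteratedFDeriv le_rfl
  unfold lap
  fun_prop

theorem norm_lap_le {f : EuclideanSpace ℝ (Fin d) → ℂ} {x : EuclideanSpace ℝ (Fin d)} {B : ℝ}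
    (hB : ‖iteratedFDeriv ℝ 2 f x‖ ≤ B) : ‖lap d f x‖ ≤ d * B := by
  unfold lap
  refine (norm_sum_le_of_le (n := fun _ => B) _ fun j _ => ?_).trans_eq (by simp)
  refine ((iteratedFDeriv ℝ 2 f x).le_opNorm _).trans ?_
  simpa [Fin.prod_univ_two] using hB

theorem norm_heatKernelLap_le {τ₀ : ℝ} (h₀ : 0 < τ₀) (hτ : τ₀ ≤ τ)
    (z : EuclideanSpace ℝ (Fin d)) :
    ‖heatKernelLap d κ τ z‖ ≤ (d * (‖κ⁻¹‖ / (2 * τ₀)) + (‖κ⁻¹‖ / (2 * τ₀)) ^ 2) *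
      ((1 + ‖z‖ ^ 2) * ‖heatKernel d κ τ z‖) := by
  have hτ0 : 0 < τ := h₀.trans_le hτ
  have hc : ‖(κ⁻¹ / (2 * τ) : ℂ)‖ ≤ ‖κ⁻¹‖ / (2 * τ₀) := by
    rw [norm_div, norm_mul, Complex.norm_real, Real.norm_of_nonneg hτ0.le, Complex.norm_ofNat]
    gcongr
  set c₁ := ‖κ⁻¹‖ / (2 * τ₀)
  have hc₁ : 0 ≤ c₁ := (norm_nonneg _).trans hc
  rw [heatKernelLap, norm_mul, ← mul_assoc]
  gcongr
  refine (norm_add_le _ _).trans ?_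
  rw [norm_neg, norm_mul, norm_mul, norm_pow, norm_pow, Complex.norm_natCast, Complex.norm_real,
    norm_norm]
  have h1 : (d : ℝ) * ‖(κ⁻¹ / (2 * τ) : ℂ)‖ ≤ d * c₁ := by gcongr
  have h2 : ‖(κ⁻¹ / (2 * τ) : ℂ)‖ ^ 2 * ‖z‖ ^ 2 ≤ c₁ ^ 2 * ‖z‖ ^ 2 := by gcongr
  have h3 : 0 ≤ (d * c₁) * ‖z‖ ^ 2 := by positivity
  nlinarith [sq_nonneg c₁]

theorem norm_integral_heatKernel_mul_le (hκ : 0 < κ.re) (hτ : 0 < τ)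
    {f : EuclideanSpace ℝ (Fin d) → ℂ} {A : ℝ} (hA : 0 ≤ A)
    (hf : ∀ z, ‖f z‖ ≤ A * Real.exp ‖z‖) :
    ‖∫ z, heatKernel d κ τ z * f z‖ ≤
      A * ((2 / (κ⁻¹.re * ‖κ‖)) ^ (d / 2 : ℝ) * Real.exp (2 / κ⁻¹.re * τ)) := by
  obtain ⟨hi, hle⟩ := integral_norm_heatKernel_mul_exp (d := d) hκ hτ
  refine (norm_integral_le_of_norm_le (hi.const_mul A)
    (Filter.Eventually.of_forall fun z => ?_)).trans ?_
  · rw [norm_mul]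
    calc ‖heatKernel d κ τ z‖ * ‖f z‖ ≤ ‖heatKernel d κ τ z‖ * (A * Real.exp ‖z‖) := by
          gcongr; exact hf z
      _ = _ := by ring
  · rw [integral_const_mul]
    gcongr

end Kernel

/-- `w` is a classical solution on `ℝ^d × [0,t]` of `∂_t w = κ Δ w + F`, with `w`, its first two
spatial derivatives and `F` bounded by `B`. -/
structure IsBoundedHeatSolution (d : ℕ) (κ : ℂ) (t B : ℝ)
    (w F : EuclideanSpace ℝ (Fin d) → ℝ → ℂ) : Prop where
  contDiff : ∀ s ∈ Set.Icc 0 t, ContDiff ℝ 2 fun x => w x s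
  bound : ∀ s ∈ Set.Icc 0 t, ∀ x, ‖w x s‖ ≤ B ∧ ‖fderiv ℝ (fun x' => w x' s) x‖ ≤ B ∧
      ‖iteratedFDeriv ℝ 2 (fun x' => w x' s) x‖ ≤ B
  continuous_forcing : ∀ s ∈ Set.Icc 0 t, Continuous fun x => F x s
  bound_forcing : ∀ s ∈ Set.Icc 0 t, ∀ x, ‖F x s‖ ≤ B
  hasDerivWithinAt : ∀ x, ∀ s ∈ Set.Icc 0 t,
    HasDerivWithinAt (fun r => w x r) (κ * lap d (fun x' => w x' s) x + F x s) (Set.Icc 0 t) s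

namespace IsBoundedHeatSolution

variable {d : ℕ} {κ : ℂ} {t B : ℝ} {w F : EuclideanSpace ℝ (Fin d) → ℝ → ℂ}

theorem restrict (h : IsBoundedHeatSolution d κ t B w F) {s : ℝ} (hs : s ≤ t) :
    IsBoundedHeatSolution d κ s B w F := by
  have hsub : Set.Icc 0 s ⊆ Set.Icc 0 t := Set.Icc_subset_Icc_right hs
  exact ⟨fun r hr => h.contDiff r (hsub hr), fun r hr => h.bound r (hsub hr),
    fun r hr => h.continuous_forcing r (hsub hr), fun r hr => h.bound_forcing r (hsub hr),
    fun x r hr => (h.hasDerivWithinAt x r (hsub hr)).mono hsub⟩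

theorem translate (h : IsBoundedHeatSolution d κ t B w F) (y : EuclideanSpace ℝ (Fin d)) :
    IsBoundedHeatSolution d κ t B (fun x => w (y + x)) (fun x => F (y + x)) := by
  refine ⟨fun s hs => (h.contDiff s hs).comp (by fun_prop : ContDiff ℝ 2 fun x => y + x),
    fun s hs x => ?_, fun s hs => (h.continuous_forcing s hs).comp (by fun_prop),
    fun s hs x => h.bound_forcing s hs _, fun x s hs => ?_⟩
  · have h1 := fderiv_comp_add_left (𝕜 := ℝ) (f := fun x' => w x' s) (x := x) y
    have h2 := iteratedFDeriv_comp_add_left (𝕜 := ℝ) 2 (f := fun x' => w x' s) y x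
    rw [h1, h2]
    exact h.bound s hs (y + x)
  · have h2 := iteratedFDeriv_comp_add_left (𝕜 := ℝ) 2 (f := fun x' => w x' s) y x
    have : lap d (fun x' => w (y + x') s) x = lap d (fun x' => w x' s) (y + x) := by
      simp only [lap, h2]
    rw [this]
    exact h.hasDerivWithinAt (y + x) s hs

theorem hasDerivAt_integral (h : IsBoundedHeatSolution d κ t B w F) (hκ : 0 < κ.re) {T : ℝ}
    (hT : t < T) {s : ℝ} (hs : s ∈ Set.Ioo 0 t) :
    HasDerivAt (fun r => ∫ z, heatKernel d κ (T - r) z * w z r)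
      (∫ z, heatKernel d κ (T - s) z * F z s) s := by
  have hB0 : 0 ≤ B := (norm_nonneg _).trans (h.bound s ⟨hs.1.le, hs.2.le⟩ 0).1
  have ht : 0 < t := hs.1.trans hs.2
  have hδ : 0 < T - t := sub_pos.2 hT
  obtain ⟨C, b, hb, hC, hdom⟩ := exists_heatKernel_dominated (d := d) hκ hδ
    (show T - t ≤ T by linarith)
  have hG : ∀ r, Continuous (heatKernel d κ (T - r)) := fun r => continuous_heatKernel
  have hL : ∀ r, Continuous (heatKernelLap d κ (T - r)) := fun r => continuous_heatKernelLap
  have hmem : ∀ r ∈ Set.Icc 0 t, T - r ∈ Set.Icc (T - t) T := fun r hr =>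
    ⟨by linarith [hr.2], by linarith [hr.1]⟩
  have hGb : ∀ r ∈ Set.Icc 0 t, ∀ z : EuclideanSpace ℝ (Fin d), ‖heatKernel d κ (T - r) z‖ ≤
      (1 + ‖z‖ ^ 2) * ‖heatKernel d κ (T - r) z‖ := fun r _ z =>
    le_mul_of_one_le_left (norm_nonneg _) (by nlinarith [sq_nonneg ‖z‖])
  have hsI : s ∈ Set.Icc 0 t := ⟨hs.1.le, hs.2.le⟩
  have hwc : ∀ r ∈ Set.Icc 0 t, Continuous fun z => w z r := fun r hr => (h.contDiff r hr).continuous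
  have hLc : Continuous (lap d fun x' => w x' s) := continuous_lap (h.contDiff s hsI)
  set K := d * (‖κ⁻¹‖ / (2 * (T - t))) + (‖κ⁻¹‖ / (2 * (T - t))) ^ 2 with hK
  have hK0 : 0 ≤ K := by positivity
  have i0 : ∀ f : EuclideanSpace ℝ (Fin d) → ℂ, ∀ B' : ℝ, Continuous f → (∀ z, ‖f z‖ ≤ B') →
      Integrable fun z => heatKernel d κ (T - s) z * f z := by
    intro f B' hf hfb
    have hB' : 0 ≤ B' := (norm_nonneg _).trans (hfb 0)
    refine integrable_of_norm_le_heatKernel hκ (τ := T - s) (by linarith [hs.2])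
      ((hG s).mul hf) B' fun z => ?_
    rw [norm_mul, mul_comm]
    exact mul_le_mul (hfb z) (hGb s hsI z) (norm_nonneg _) hB'
  have main := hasDerivAt_integral_of_dominated_loc_of_deriv_le (μ := volume)
    (F := fun r z => heatKernel d κ (T - r) z * w z r) (x₀ := s) (s := Set.Ioo 0 t)
    (F' := fun r z => -(κ * heatKernelLap d κ (T - r) z) * w z r + heatKernel d κ (T - r) z *
      (κ * lap d (fun x' => w x' r) z + F z r))
    (bound := fun z => (‖κ‖ * K * B + (‖κ‖ * (d * B) + B)) * (C * Real.exp (-b * ‖z‖ ^ 2)))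
    (Ioo_mem_nhds hs.1 hs.2)
    (by
      filter_upwards [Ioo_mem_nhds hs.1 hs.2] with r hr
      exact ((hG r).mul (hwc r ⟨hr.1.le, hr.2.le⟩)).aestronglyMeasurable)
    (i0 _ B (hwc s hsI) fun z => (h.bound s hsI z).1)
    (by
      have h1 := hG s
      have h2 := hL s
      have h3 := hwc s hsI
      have h4 := h.continuous_forcing s hsI
      exact Continuous.aestronglyMeasurable (by fun_prop))
    (Filter.Eventually.of_forall fun z r hr => by
      have hr' : r ∈ Set.Icc 0 t := ⟨hr.1.le, hr.2.le⟩
      have b1 := norm_heatKernelLap_le (d := d) (κ := κ) hδ (hmem r hr').1 z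
      have b2 := norm_lap_le (h.bound r hr' z).2.2
      have b3 := hGb r hr' z
      have b4 := hdom (T - r) (hmem r hr') z
      have b5 := h.bound_forcing r hr' z
      have b6 := (h.bound r hr' z).1
      have b7 : ‖κ * lap d (fun x' => w x' r) z + F z r‖ ≤ ‖κ‖ * (d * B) + B := by
        refine (norm_add_le _ _).trans (add_le_add ?_ b5)
        rw [norm_mul]; gcongr
      refine (norm_add_le _ _).trans ?_
      rw [norm_mul, norm_neg, norm_mul, norm_mul]
      calc ‖κ‖ * ‖heatKernelLap d κ (T - r) z‖ * ‖w z r‖ +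
            ‖heatKernel d κ (T - r) z‖ * ‖κ * lap d (fun x' => w x' r) z + F z r‖
          ≤ ‖κ‖ * (K * (C * Real.exp (-b * ‖z‖ ^ 2))) * B +
            (C * Real.exp (-b * ‖z‖ ^ 2)) * (‖κ‖ * (d * B) + B) := by
            gcongr
            · exact b1.trans (mul_le_mul_of_nonneg_left b4 hK0)
            · exact b3.trans b4
        _ = _ := by ring)
    (((integrable_exp_neg_mul_sq_norm hb).const_mul C).const_mul _)
    (Filter.Eventually.of_forall fun z r hr => by
      have hr' : r ∈ Set.Icc 0 t := ⟨hr.1.le, hr.2.le⟩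
      have h1 := (h.hasDerivWithinAt z r hr').hasDerivAt (Icc_mem_nhds hr.1 hr.2)
      have h2 := (hasDerivAt_heatKernel_time (d := d) hκ
        (show 0 < T - r by linarith [hr.2]) z).scomp r ((hasDerivAt_id r).const_sub T)
      refine (h2.mul h1).congr_deriv ?_
      simp)
  refine main.2.congr_deriv ?_
  have hsT : 0 < T - s := by linarith [hs.2]
  have i1 : Integrable fun z => heatKernelLap d κ (T - s) z * w z s := by
    refine integrable_of_norm_le_heatKernel hκ hsT ((hL s).mul (hwc s hsI)) (K * B) fun z => ?_
    have b1 := norm_heatKernelLap_le (d := d) (κ := κ) hδ (hmem s hsI).1 z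
    rw [norm_mul, mul_right_comm]
    exact mul_le_mul b1 (h.bound s hsI z).1 (norm_nonneg _) (by positivity)
  have i2 := i0 _ _ hLc fun z => norm_lap_le (h.bound s hsI z).2.2
  have i3 := i0 _ _ (h.continuous_forcing s hsI) (h.bound_forcing s hsI)
  have green := integral_heatKernel_mul_lap hκ hsT (h.contDiff s hsI) (h.bound s hsI)
  have e : ∀ z, -(κ * heatKernelLap d κ (T - s) z) * w z s + heatKernel d κ (T - s) z *
      (κ * lap d (fun x' => w x' s) z + F z s) =
      -(κ * (heatKernelLap d κ (T - s) z * w z s)) +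
      (κ * (heatKernel d κ (T - s) z * lap d (fun x' => w x' s) z) +
      heatKernel d κ (T - s) z * F z s) := fun z => by ring
  simp_rw [e]
  rw [integral_add (i1.const_mul κ).fun_neg ((i2.const_mul κ).fun_add i3),
    integral_add (i2.const_mul κ) i3, integral_neg, integral_const_mul, integral_const_mul, green]
  ring

theorem continuousOn_integral (h : IsBoundedHeatSolution d κ t B w F) (hκ : 0 < κ.re)
    (ht : 0 ≤ t) {T : ℝ} (hT : t < T) :
    ContinuousOn (fun r => ∫ z, heatKernel d κ (T - r) z * w z r) (Set.Icc 0 t) := by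
  obtain ⟨C, b, hb, hC, hdom⟩ := exists_heatKernel_dominated (d := d) hκ (sub_pos.2 hT)
    (show T - t ≤ T by linarith)
  refine continuousOn_of_dominated
    (bound := fun z => (C * Real.exp (-b * ‖z‖ ^ 2)) * B) (fun r hr => ?_) (fun r hr => ?_)
    (((integrable_exp_neg_mul_sq_norm hb).const_mul C).mul_const _) ?_
  · exact (continuous_heatKernel.mul (h.contDiff r hr).continuous).aestronglyMeasurable
  · refine Filter.Eventually.of_forall fun z => ?_
    have b1 := hdom (T - r) ⟨by linarith [hr.2], by linarith [hr.1]⟩ z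
    have b2 : ‖heatKernel d κ (T - r) z‖ ≤ (1 + ‖z‖ ^ 2) * ‖heatKernel d κ (T - r) z‖ :=
      le_mul_of_one_le_left (norm_nonneg _) (by nlinarith [sq_nonneg ‖z‖])
    rw [norm_mul]
    exact mul_le_mul (b2.trans b1) (h.bound r hr z).1 (norm_nonneg _) (by positivity)
  · refine Filter.Eventually.of_forall fun z r hr => ?_
    have h2 := (hasDerivAt_heatKernel_time (d := d) hκ
        (show 0 < T - r by linarith [hr.2]) z).scomp r ((hasDerivAt_id r).const_sub T)
    exact h2.continuousAt.continuousWithinAt.mul (h.hasDerivWithinAt z r hr).continuousWithinAt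

end IsBoundedHeatSolution

/-- A mean value inequality with derivative bounds in the open interval only. -/
theorem norm_le_of_norm_hasDerivAt_le {f f' : ℝ → ℂ} {b b' : ℝ → ℝ} {t : ℝ} (ht : 0 ≤ t)
    (hf : ContinuousOn f (Set.Icc 0 t)) (hb : ContinuousOn b (Set.Icc 0 t))
    (hf' : ∀ s ∈ Set.Ioo 0 t, HasDerivAt f (f' s) s)
    (hb' : ∀ s ∈ Set.Ioo 0 t, HasDerivAt b (b' s) s)
    (hle : ∀ s ∈ Set.Ioo 0 t, ‖f' s‖ ≤ b' s) (h0 : ‖f 0‖ ≤ b 0) : ‖f t‖ ≤ b t := by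
  obtain ⟨ζ, hζ, hζf⟩ := Complex.exists_norm_eq_mul_self (f t)
  have hre : ∀ v : ℂ, (ζ * v).re ≤ ‖v‖ := fun v =>
    (Complex.re_le_norm _).trans_eq (by rw [norm_mul, hζ, one_mul])
  have hanti : AntitoneOn (fun s => (ζ * f s).re - b s) (Set.Icc 0 t) := by
    refine antitoneOn_of_hasDerivWithinAt_nonpos (f' := fun s => (ζ * f' s).re - b' s)
      (convex_Icc 0 t) ?_ ?_ ?_
    · exact (Complex.continuous_re.comp_continuousOn (continuousOn_const.mul hf)).sub hb
    · rw [interior_Icc]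
      intro s hs
      have h1 : HasDerivAt (fun r => (ζ * f r).re) (ζ * f' s).re s :=
        Complex.reCLM.hasFDerivAt.comp_hasDerivAt s ((hf' s hs).const_mul ζ)
      exact (h1.sub (hb' s hs)).hasDerivWithinAt
    · rw [interior_Icc]
      intro s hs
      linarith [hre (f' s), hle s hs]
  have h := hanti (Set.left_mem_Icc.2 ht) (Set.right_mem_Icc.2 ht) ht
  have h2 : (ζ * f t).re = ‖f t‖ := by rw [← hζf, Complex.ofReal_re]
  simp only [h2] at h
  linarith [hre (f 0)]

namespace IsBoundedHeatSolution

variable {d : ℕ} {κ : ℂ} {t B : ℝ} {w F : EuclideanSpace ℝ (Fin d) → ℝ → ℂ}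

/-- Weighted a priori bound at the origin. -/
theorem norm_apply_zero_le (h : IsBoundedHeatSolution d κ t B w F) (hκ : 0 < κ.re) (ht : 0 ≤ t)
    {A K γ : ℝ} (hA : 0 ≤ A) (hK : 0 ≤ K) (hγ : 2 / κ⁻¹.re < γ)
    (h0 : ∀ z, ‖w z 0‖ ≤ A * Real.exp ‖z‖)
    (hF : ∀ s ∈ Set.Icc 0 t, ∀ z, ‖F z s‖ ≤ K * Real.exp (γ * s) * Real.exp ‖z‖) :
    ‖w 0 t‖ ≤ (2 / (κ⁻¹.re * ‖κ‖)) ^ (d / 2 : ℝ) * Real.exp (γ * t) *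
      (A + K / (γ - 2 / κ⁻¹.re)) := by
  have hρ := inv_re_pos_of_re_pos hκ
  set c := 2 / κ⁻¹.re with hc
  set c₀ := (2 / (κ⁻¹.re * ‖κ‖)) ^ (d / 2 : ℝ) with hc₀
  have hc₀0 : 0 ≤ c₀ := by positivity
  have hγc : 0 < γ - c := sub_pos.2 hγ
  have htI : t ∈ Set.Icc 0 t := ⟨ht, le_rfl⟩
  have hlip : ∀ z, ‖w z t - w 0 t‖ ≤ B * ‖z‖ := by
    intro z
    have := (convex_univ (𝕜 := ℝ)).norm_image_sub_le_of_norm_fderiv_le (f := fun x => w x t)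
      (x := (0 : EuclideanSpace ℝ (Fin d))) (y := z) (C := B)
      (fun x _ => (h.contDiff t htI).differentiable (by norm_num) x)
      (fun x _ => (h.bound t htI x).2.1) (Set.mem_univ _) (Set.mem_univ _)
    simpa using this
  have key : ∀ δ : ℝ, 0 < δ → ‖w 0 t‖ ≤ c₀ * A * Real.exp (c * (t + δ)) +
      c₀ * K * Real.exp (c * (t + δ)) * (Real.exp ((γ - c) * t) / (γ - c)) +
      B * (1 + 8 / κ⁻¹.re) * c₀ * √δ := by
    intro δ hδ
    have hT : t < t + δ := by linarith
    have hJ := norm_le_of_norm_hasDerivAt_le ht (h.continuousOn_integral hκ ht hT)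
      (f' := fun s => ∫ z, heatKernel d κ (t + δ - s) z * F z s)
      (b := fun s => c₀ * A * Real.exp (c * (t + δ)) +
        c₀ * K * Real.exp (c * (t + δ)) * (Real.exp ((γ - c) * s) / (γ - c)))
      (b' := fun s => K * Real.exp (γ * s) * (c₀ * Real.exp (c * (t + δ - s))))
      (by fun_prop) (fun s hs => h.hasDerivAt_integral hκ hT hs)
      (fun s _ => by
        have h1 : HasDerivAt (fun s : ℝ => Real.exp ((γ - c) * s))
            (Real.exp ((γ - c) * s) * (γ - c)) s := by
          simpa using ((hasDerivAt_id s).const_mul (γ - c)).exp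
        have h2 := ((h1.div_const (γ - c)).const_mul (c₀ * K * Real.exp (c * (t + δ)))).const_add
          (c₀ * A * Real.exp (c * (t + δ)))
        refine h2.congr_deriv ?_
        rw [mul_div_cancel_right₀ _ hγc.ne']
        have e1 : Real.exp (c * (t + δ)) * Real.exp ((γ - c) * s) =
            Real.exp (γ * s) * Real.exp (c * (t + δ - s)) := by
          rw [← Real.exp_add, ← Real.exp_add]; congr 1; ring
        linear_combination c₀ * K * e1)
      (fun s hs => norm_integral_heatKernel_mul_le hκ (by linarith [hs.2]) (by positivity)
        (hF s ⟨hs.1.le, hs.2.le⟩))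
      (by
        have := norm_integral_heatKernel_mul_le hκ (τ := t + δ - 0) (by linarith) hA h0
        refine this.trans ?_
        rw [sub_zero]
        have : 0 ≤ c₀ * K * Real.exp (c * (t + δ)) * (Real.exp ((γ - c) * 0) / (γ - c)) := by
          positivity
        linarith)
    have hid := norm_integral_heatKernel_mul_sub_le (d := d) hκ hδ (f := fun z => w z t)
      (h.contDiff t htI).continuous (fun z => (h.bound t htI z).1) hlip
    simp only [add_sub_cancel_left] at hJ
    have htri : ‖w 0 t‖ ≤ ‖∫ z, heatKernel d κ δ z * w z t‖ +
        ‖(∫ z, heatKernel d κ δ z * w z t) - w 0 t‖ := by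
      have := norm_sub_le (∫ z, heatKernel d κ δ z * w z t)
        ((∫ z, heatKernel d κ δ z * w z t) - w 0 t)
      simpa using this
    linarith
  have hlim : Filter.Tendsto (fun δ : ℝ => c₀ * A * Real.exp (c * (t + δ)) +
      c₀ * K * Real.exp (c * (t + δ)) * (Real.exp ((γ - c) * t) / (γ - c)) +
      B * (1 + 8 / κ⁻¹.re) * c₀ * √δ) (nhdsWithin 0 (Set.Ioi 0))
      (nhds (c₀ * A * Real.exp (c * (t + 0)) +
      c₀ * K * Real.exp (c * (t + 0)) * (Real.exp ((γ - c) * t) / (γ - c)) +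
      B * (1 + 8 / κ⁻¹.re) * c₀ * √0)) := by
    refine Filter.Tendsto.mono_left (Continuous.tendsto ?_ 0) nhdsWithin_le_nhds
    fun_prop
  have hfin := ge_of_tendsto hlim (Filter.eventually_of_mem self_mem_nhdsWithin key)
  rw [Real.sqrt_zero, mul_zero, add_zero, add_zero] at hfin
  refine hfin.trans ?_
  have e1 : Real.exp (c * t) * Real.exp ((γ - c) * t) = Real.exp (γ * t) := by
    rw [← Real.exp_add]; congr 1; ring
  have e2 : c₀ * K * Real.exp (c * t) * (Real.exp ((γ - c) * t) / (γ - c)) =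
      c₀ * K * Real.exp (γ * t) / (γ - c) := by rw [← e1]; ring
  have e3 : Real.exp (c * t) ≤ Real.exp (γ * t) := by gcongr
  rw [e2]
  have e4 : c₀ * A * Real.exp (c * t) ≤ c₀ * A * Real.exp (γ * t) := by gcongr
  calc _ ≤ c₀ * A * Real.exp (γ * t) + c₀ * K * Real.exp (γ * t) / (γ - c) := by linarith
    _ = _ := by ring

/-- Localised growth estimate for `∂_t w = κ Δ w + F` when `F` is dominated by a multiple of `w`:
an exponentially weighted bound at time `0` propagates with exponential growth in time. -/
theorem norm_le_of_norm_forcing_le (h : IsBoundedHeatSolution d κ t B w F) (hκ : 0 < κ.re)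
    {A K c₀ γ : ℝ} (hA : 0 ≤ A) (hK : 0 < K) (hc₁ : 1 ≤ c₀)
    (hc₀ : (2 / (κ⁻¹.re * ‖κ‖)) ^ (d / 2 : ℝ) ≤ c₀) (hγ : γ = 2 / κ⁻¹.re + 2 * c₀ * K)
    (x : EuclideanSpace ℝ (Fin d)) (h0 : ∀ y, ‖w y 0‖ ≤ A * Real.exp ‖y - x‖)
    (hF : ∀ s ∈ Set.Icc 0 t, ∀ y, ‖F y s‖ ≤ K * ‖w y s‖) :
    ∀ s ∈ Set.Icc 0 t, ∀ y, ‖w y s‖ ≤ 2 * c₀ * A * Real.exp (γ * s) * Real.exp ‖y - x‖ := by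
  intro s₁ hs₁ y₁
  have hB0 : 0 ≤ B := (norm_nonneg _).trans (h.bound s₁ hs₁ y₁).1
  have hρ := inv_re_pos_of_re_pos hκ
  have hc₀0 : 0 < c₀ := zero_lt_one.trans_le hc₁
  have hγ0 : 0 < γ := by rw [hγ]; positivity
  have iter : ∀ n : ℕ, ∀ s ∈ Set.Icc 0 t, ∀ y, ‖w y s‖ ≤
      (2 * c₀ * A + B * (1 / 2) ^ n) * Real.exp (γ * s) * Real.exp ‖y - x‖ := by
    intro n
    induction n with
    | zero =>
      intro s hs y
      have h1 : 1 ≤ Real.exp (γ * s) := Real.one_le_exp (mul_nonneg hγ0.le hs.1)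
      have h2 : 1 ≤ Real.exp ‖y - x‖ := Real.one_le_exp (norm_nonneg _)
      have h3 : 0 ≤ 2 * c₀ * A := by positivity
      calc ‖w y s‖ ≤ B := (h.bound s hs y).1
        _ ≤ 2 * c₀ * A + B * (1 / 2) ^ 0 := by simp; positivity
        _ ≤ (2 * c₀ * A + B * (1 / 2) ^ 0) * Real.exp (γ * s) :=
          le_mul_of_one_le_right (by positivity) h1
        _ ≤ _ := le_mul_of_one_le_right (by positivity) h2
    | succ n ih =>
      intro s hs y
      set R := 2 * c₀ * A + B * (1 / 2) ^ n with hR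
      have hR0 : 0 ≤ R := by positivity
      have tri : ∀ z, Real.exp ‖y + z - x‖ ≤ Real.exp ‖y - x‖ * Real.exp ‖z‖ := by
        intro z
        rw [← Real.exp_add]
        gcongr
        have : y + z - x = (y - x) + z := by abel
        rw [this]
        exact norm_add_le _ _
      have := ((h.restrict hs.2).translate y).norm_apply_zero_le hκ hs.1
        (A := A * Real.exp ‖y - x‖) (K := K * R * Real.exp ‖y - x‖) (γ := γ)
        (by positivity) (by positivity) (by rw [hγ]; linarith [mul_pos hc₀0 hK])
        (fun z => (h0 (y + z)).trans (by
          rw [mul_assoc]; exact mul_le_mul_of_nonneg_left (tri z) hA))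
        (fun r hr z => by
          have hr' : r ∈ Set.Icc 0 t := ⟨hr.1, hr.2.trans hs.2⟩
          calc ‖F (y + z) r‖ ≤ K * ‖w (y + z) r‖ := hF r hr' _
            _ ≤ K * (R * Real.exp (γ * r) * (Real.exp ‖y - x‖ * Real.exp ‖z‖)) := by
              have := (ih r hr' (y + z)).trans
                (mul_le_mul_of_nonneg_left (tri z) (by positivity))
              gcongr
            _ = _ := by ring)
      rw [add_zero] at this
      refine this.trans ?_
      have hg : γ - 2 / κ⁻¹.re = 2 * c₀ * K := by rw [hγ]; ring
      rw [hg]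
      calc (2 / (κ⁻¹.re * ‖κ‖)) ^ (d / 2 : ℝ) * Real.exp (γ * s) *
            (A * Real.exp ‖y - x‖ + K * R * Real.exp ‖y - x‖ / (2 * c₀ * K))
          ≤ c₀ * Real.exp (γ * s) *
            (A * Real.exp ‖y - x‖ + K * R * Real.exp ‖y - x‖ / (2 * c₀ * K)) := by gcongr
        _ = (2 * c₀ * A + B * (1 / 2) ^ (n + 1)) * Real.exp (γ * s) * Real.exp ‖y - x‖ := by
          rw [hR]; field_simp; ring
  have hlim : Filter.Tendsto (fun n : ℕ => (2 * c₀ * A + B * (1 / 2 : ℝ) ^ n) *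
      Real.exp (γ * s₁) * Real.exp ‖y₁ - x‖) Filter.atTop
      (nhds ((2 * c₀ * A + B * 0) * Real.exp (γ * s₁) * Real.exp ‖y₁ - x‖)) :=
    ((((tendsto_pow_atTop_nhds_zero_of_lt_one (by norm_num) (by norm_num)).const_mul B).const_add
      _).mul_const _).mul_const _
  simpa using ge_of_tendsto' hlim fun n => iter n s₁ hs₁ y₁

end IsBoundedHeatSolution

theorem norm_rpow_mul_self_sub_le {p M : ℝ} (hp : 1 ≤ p) {u v : ℂ} (hu : ‖u‖ ≤ M)
    (hv : ‖v‖ ≤ M) :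
    ‖((‖u‖ ^ p : ℝ) : ℂ) * u - ((‖v‖ ^ p : ℝ) : ℂ) * v‖ ≤
      (M ^ p + p * M ^ (p - 1) * M) * ‖u - v‖ := by
  have hM : 0 ≤ M := (norm_nonneg u).trans hu
  have hlip : ‖‖u‖ ^ p - ‖v‖ ^ p‖ ≤ p * M ^ (p - 1) * ‖‖u‖ - ‖v‖‖ := by
    refine (convex_Icc 0 M).norm_image_sub_le_of_norm_hasDerivWithin_le (f := fun x : ℝ => x ^ p)
      (f' := fun x => p * x ^ (p - 1))
      (fun x _ => (Real.hasDerivAt_rpow_const (Or.inr hp)).hasDerivWithinAt) (fun x hx => ?_)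
      ⟨norm_nonneg v, hv⟩ ⟨norm_nonneg u, hu⟩
    have hx0 := hx.1
    rw [Real.norm_of_nonneg (by positivity)]
    gcongr
    exact hx.2
  have e : ((‖u‖ ^ p : ℝ) : ℂ) * u - ((‖v‖ ^ p : ℝ) : ℂ) * v =
      ((‖u‖ ^ p : ℝ) : ℂ) * (u - v) + ((‖u‖ ^ p - ‖v‖ ^ p : ℝ) : ℂ) * v := by
    push_cast; ring
  rw [e]
  refine (norm_add_le _ _).trans ?_
  rw [norm_mul, norm_mul, Complex.norm_real, Complex.norm_real,
    Real.norm_of_nonneg (by positivity)]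
  have h1 : ‖u‖ ^ p ≤ M ^ p := by gcongr
  have h2 : ‖‖u‖ ^ p - ‖v‖ ^ p‖ ≤ p * M ^ (p - 1) * ‖u - v‖ := by
    refine hlip.trans ?_
    gcongr
    exact abs_norm_sub_norm_le u v
  calc ‖u‖ ^ p * ‖u - v‖ + ‖‖u‖ ^ p - ‖v‖ ^ p‖ * ‖v‖
      ≤ M ^ p * ‖u - v‖ + (p * M ^ (p - 1) * ‖u - v‖) * M := by gcongr
    _ = _ := by ring

/-- The reaction term `z − (1+iβ)|z|^{2q}z` of the Ginzburg–Landau equation. -/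
noncomputable def glReaction (q β : ℝ) (z : ℂ) : ℂ :=
  z - (1 + Complex.I * (β : ℂ)) * ((‖z‖ ^ (2 * q) : ℝ) : ℂ) * z

/-- A Lipschitz constant of `glReaction q β` on the disc of radius `M`. -/
noncomputable def glLipschitz (q β M : ℝ) : ℝ :=
  1 + ‖1 + Complex.I * (β : ℂ)‖ * (M ^ (2 * q) + 2 * q * M ^ (2 * q - 1) * M)

theorem continuous_glReaction {q β : ℝ} (hq : 0 ≤ q) : Continuous (glReaction q β) := by
  have : Continuous fun z : ℂ => ‖z‖ ^ (2 * q) :=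
    continuous_norm.rpow_const fun _ => Or.inr (by linarith)
  unfold glReaction
  fun_prop

theorem norm_glReaction_sub_le {q β M : ℝ} (hq : 1 / 2 < q) {u v : ℂ} (hu : ‖u‖ ≤ M)
    (hv : ‖v‖ ≤ M) :
    ‖glReaction q β u - glReaction q β v‖ ≤ glLipschitz q β M * ‖u - v‖ := by
  have e : glReaction q β u - glReaction q β v = (u - v) - (1 + Complex.I * (β : ℂ)) *
      (((‖u‖ ^ (2 * q) : ℝ) : ℂ) * u - ((‖v‖ ^ (2 * q) : ℝ) : ℂ) * v) := by
    unfold glReaction; ring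
  rw [e]
  refine (norm_sub_le _ _).trans ?_
  rw [norm_mul, glLipschitz]
  have h := mul_le_mul_of_nonneg_left
    (norm_rpow_mul_self_sub_le (p := 2 * q) (by linarith) hu hv)
    (norm_nonneg (1 + Complex.I * (β : ℂ)))
  linarith

theorem lap_sub {d : ℕ} {f g : EuclideanSpace ℝ (Fin d) → ℂ} (hf : ContDiff ℝ 2 f)
    (hg : ContDiff ℝ 2 g) (x : EuclideanSpace ℝ (Fin d)) :
    lap d (fun y => f y - g y) x = lap d f x - lap d g x := by
  have h : iteratedFDeriv ℝ 2 (fun y => f y - g y) x =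
      iteratedFDeriv ℝ 2 f x - iteratedFDeriv ℝ 2 g x :=
    iteratedFDeriv_sub_apply hf.contDiffAt hg.contDiffAt
  simp [lap, h]

/-- The difference of two Ginzburg–Landau solutions with the same forcing solves a linear heat
equation forced by the difference of the reaction terms. -/
theorem IsGLSolution.exists_isBoundedHeatSolution_sub {d : ℕ} {q α β M t : ℝ} (hq : 1 / 2 < q)
    (ht : 0 ≤ t) {g u v : EuclideanSpace ℝ (Fin d) → ℝ → ℂ}
    (hu : IsGLSolution d q α β (Set.Icc 0 t) g u) (hv : IsGLSolution d q α β (Set.Icc 0 t) g v)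
    (hM : ∀ x, ∀ s ∈ Set.Icc (0 : ℝ) t, ‖u x s‖ ≤ M ∧ ‖v x s‖ ≤ M) :
    ∃ B, IsBoundedHeatSolution d (1 + Complex.I * (α : ℂ)) t B (fun x s => u x s - v x s)
      (fun x s => glReaction q β (u x s) - glReaction q β (v x s)) := by
  obtain ⟨-, hu2, ⟨Bu, hBu⟩, hut⟩ := hu
  obtain ⟨-, hv2, ⟨Bv, hBv⟩, hvt⟩ := hv
  have h0 : (0 : ℝ) ∈ Set.Icc 0 t := ⟨le_rfl, ht⟩
  have hM0 : 0 ≤ M := (norm_nonneg _).trans (hM 0 0 h0).1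
  have hBu0 : 0 ≤ Bu := (norm_nonneg _).trans (hBu 0 h0 0).1
  have hBv0 : 0 ≤ Bv := (norm_nonneg _).trans (hBv 0 h0 0).1
  have hq0 : 0 < q := by linarith
  have hK0 : 0 ≤ glLipschitz q β M := by unfold glLipschitz; positivity
  refine ⟨Bu + Bv + glLipschitz q β M * (M + M), fun s hs => (hu2 s hs).sub (hv2 s hs),
    fun s hs x => ?_, fun s hs => ?_, fun s hs x => ?_, fun x s hs => ?_⟩
  · have h1 : fderiv ℝ (fun x' => u x' s - v x' s) x =
        fderiv ℝ (fun x' => u x' s) x - fderiv ℝ (fun x' => v x' s) x :=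
      fderiv_fun_sub ((hu2 s hs).differentiable (by norm_num) x)
        ((hv2 s hs).differentiable (by norm_num) x)
    have h2 : iteratedFDeriv ℝ 2 (fun x' => u x' s - v x' s) x =
        iteratedFDeriv ℝ 2 (fun x' => u x' s) x - iteratedFDeriv ℝ 2 (fun x' => v x' s) x :=
      iteratedFDeriv_sub_apply (hu2 s hs).contDiffAt (hv2 s hs).contDiffAt
    rw [h1, h2]
    obtain ⟨a1, a2, a3⟩ := hBu s hs x
    obtain ⟨b1, b2, b3⟩ := hBv s hs x
    have hKM : 0 ≤ glLipschitz q β M * (M + M) := by positivity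
    exact ⟨(norm_sub_le _ _).trans (by linarith), (norm_sub_le _ _).trans (by linarith),
      (norm_sub_le _ _).trans (by linarith)⟩
  · exact ((continuous_glReaction hq0.le).comp (hu2 s hs).continuous).sub
      ((continuous_glReaction hq0.le).comp (hv2 s hs).continuous)
  · obtain ⟨a, b⟩ := hM x s hs
    refine (norm_glReaction_sub_le hq a b).trans ?_
    have : ‖u x s - v x s‖ ≤ M + M := (norm_sub_le _ _).trans (add_le_add a b)
    have := mul_le_mul_of_nonneg_left this hK0
    linarith
  · refine ((hut x s hs).sub (hvt x s hs)).congr_deriv ?_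
    rw [lap_sub (hu2 s hs) (hv2 s hs)]
    unfold glReaction
    ring

/-- A function bounded by `2M` and by `ε` on the cube `Q_L` has an exponentially weighted bound of
order `ε` centred at any point of depth `log (1/ε)` in the cube. -/
theorem norm_le_mul_exp_of_inCube {d : ℕ} {M ε L ℓ : ℝ} (hM : 0 ≤ M) (hε : 0 < ε)
    (hℓ : Real.log (1 / ε) ≤ ℓ / 2) {f : EuclideanSpace ℝ (Fin d) → ℂ}
    (hfM : ∀ y, ‖f y‖ ≤ 2 * M) (hfε : ∀ y, inCube d L y → ‖f y‖ ≤ ε)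
    {x : EuclideanSpace ℝ (Fin d)} (hx : inCube d (L - ℓ) x) (y : EuclideanSpace ℝ (Fin d)) :
    ‖f y‖ ≤ (1 + 2 * M) * ε * Real.exp ‖y - x‖ := by
  by_cases hy : inCube d L y
  · have h1 : 1 ≤ Real.exp ‖y - x‖ := Real.one_le_exp (norm_nonneg _)
    calc ‖f y‖ ≤ ε := hfε y hy
      _ ≤ (1 + 2 * M) * ε := by nlinarith
      _ ≤ _ := le_mul_of_one_le_right (by positivity) h1
  · simp only [inCube, not_forall, not_le] at hy
    obtain ⟨j, hj⟩ := hy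
    have h1 : |y j - x j| ≤ ‖y - x‖ := by simpa using PiLp.norm_apply_le (y - x) j
    have h2 : |y j| - |x j| ≤ |y j - x j| := abs_sub_abs_le_abs_sub _ _
    have h3 : Real.log (1 / ε) ≤ ‖y - x‖ := by
      have := hx j
      linarith
    have h4 : 1 / ε ≤ Real.exp ‖y - x‖ := (Real.log_le_iff_le_exp (by positivity)).1 h3
    rw [div_le_iff₀ hε] at h4
    calc ‖f y‖ ≤ (2 * M) * 1 := by linarith [hfM y]
      _ ≤ (1 + 2 * M) * (Real.exp ‖y - x‖ * ε) := by gcongr; linarith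
      _ = _ := by ring

/-- Localised exponential divergence estimate (Lemma 5.4 of the paper): there are
constants `C, γ` such that for all sufficiently small `ε > 0`, if two bounded classical
solutions (bounded by `M`) with the same forcing satisfy
`sup_{Q_L} |u(0) − v(0)| ≤ ε`, then `sup_{Q_{L'}} |u(t) − v(t)| ≤ C e^{γt} ε`,
where `L' = L − C(1+t) log(1/ε)`. -/
theorem localized_divergence (d : ℕ) (hd1 : 1 ≤ d) (hd2 : d ≤ 2)
    (q : ℝ) (hq : 1 / 2 < q) (α β : ℝ) (hβ : |β| ≤ Real.sqrt (2 * q + 1) / q)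
    (M : ℝ) (hM : 0 < M) :
    ∃ C γ : ℝ, ∃ ε₀ : ℝ, 0 < ε₀ ∧ ∀ ε : ℝ, 0 < ε → ε ≤ ε₀ →
      ∀ t : ℝ, 0 < t → ∀ L : ℝ, 0 < L →
      0 < L - C * (1 + t) * Real.log (1 / ε) →
      ∀ g u v : EuclideanSpace ℝ (Fin d) → ℝ → ℂ,
      (∃ Mg : ℝ, ∀ x s, ‖g x s‖ ≤ Mg) →
      ContinuousOn (fun p : EuclideanSpace ℝ (Fin d) × ℝ => g p.1 p.2)
        (Set.univ ×ˢ Set.Icc 0 t) →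
      IsGLSolution d q α β (Set.Icc 0 t) g u →
      IsGLSolution d q α β (Set.Icc 0 t) g v →
      (∀ x, ∀ s ∈ Set.Icc (0 : ℝ) t, ‖u x s‖ ≤ M ∧ ‖v x s‖ ≤ M) →
      (∀ x, inCube d L x → ‖u x 0 - v x 0‖ ≤ ε) →
      ∀ x, inCube d (L - C * (1 + t) * Real.log (1 / ε)) x →
        ‖u x t - v x t‖ ≤ C * Real.exp (γ * t) * ε := by
  set κ : ℂ := 1 + Complex.I * (α : ℂ) with hκdef
  have hκ : 0 < κ.re := by simp [hκdef]
  set c₀ : ℝ := max 1 ((2 / (κ⁻¹.re * ‖κ‖)) ^ (d / 2 : ℝ)) with hc₀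
  have hc₁ : 1 ≤ c₀ := le_max_left _ _
  have hq0 : 0 < q := by linarith
  have hK0 : 0 < glLipschitz q β M := by unfold glLipschitz; positivity
  set γ : ℝ := 2 / κ⁻¹.re + 2 * c₀ * glLipschitz q β M with hγ
  set C : ℝ := 2 * c₀ * (1 + 2 * M) with hC
  have hC2 : 2 ≤ C := by rw [hC]; nlinarith
  refine ⟨C, γ, 1, one_pos, ?_⟩
  intro ε hε hε1 t ht L _ _ g u v _ _ hu hv huv h0 x hx
  obtain ⟨B, hw⟩ := hu.exists_isBoundedHeatSolution_sub hq ht.le hv huv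
  have ht0 : (0 : ℝ) ∈ Set.Icc 0 t := ⟨le_rfl, ht.le⟩
  have hlog : 0 ≤ Real.log (1 / ε) := Real.log_nonneg (by rwa [le_div_iff₀ hε, one_mul])
  have hdepth : Real.log (1 / ε) ≤ C * (1 + t) * Real.log (1 / ε) / 2 := by
    have : 2 ≤ C * (1 + t) := by nlinarith
    nlinarith
  have hinit := norm_le_mul_exp_of_inCube (f := fun y => u y 0 - v y 0) hM.le hε hdepth
    (fun y => (norm_sub_le _ _).trans (by linarith [huv y 0 ht0])) h0 hx
  have key := hw.norm_le_of_norm_forcing_le hκ (by positivity) hK0 hc₁ (le_max_right _ _) hγ x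
    hinit (fun s hs y => norm_glReaction_sub_le hq (huv y s hs).1 (huv y s hs).2)
    t ⟨ht.le, le_rfl⟩ x
  rw [sub_self, norm_zero, Real.exp_zero, mul_one] at key
  refine key.trans_eq ?_
  rw [hC]
  ring
end
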